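/- arXiv:1804.08810 — 2 statements merged into one kernel-verified Lean document; each statement's English description precedes it below -/
import Mathlib

section
/- There exist constants c1, c2 > 0 such that for all sufficiently large even N the following holds. Let g ∈ G[X] be the Raz–Yehudayoff polynomial on X = {x_1,…,x_N}. Suppose g = f_1 + ⋯ + f_m where, for each i, f_i is computed by an ROABP of width s_i ≥ 2 over G with some variable order π_i, and let s = max{s_1,…,s_m}. Then m ≥ 2^{c1·N^{1/5}} / s^{c2·log N}. -/
open MvPolynomial

noncomputable section

/-- A multilinear polynomial: every exponent is at most 1. -/
def MLin {σ : Type*} {K : Type*} [CommSemiring K] (f : MvPolynomial σ K) : Prop :=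
  ∀ d ∈ f.support, ∀ i, d i ≤ 1

/-- The partial derivative matrix of a multilinear polynomial over Y ∪ Z
(Y = `inl`-variables, Z = `inr`-variables), rows and columns indexed by subsets. -/
def pdm {h : ℕ} {K : Type*} [CommSemiring K] (f : MvPolynomial (Fin h ⊕ Fin h) K) :
    Matrix (Finset (Fin h)) (Finset (Fin h)) K := fun S T =>
  f.coeff ((∑ i ∈ S, Finsupp.single (Sum.inl i) 1) + ∑ j ∈ T, Finsupp.single (Sum.inr j) 1)

/-- The field G = F(W), the field of rational functions over F in variables
`w_{i,k,j}`, `i,k,j ∈ ℕ`. -/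
abbrev Gf (F : Type*) [Field F] : Type _ := FractionRing (MvPolynomial (ℕ × ℕ × ℕ) F)

/-- The element w_{i,k,j} of G. -/
def wv (F : Type*) [Field F] (i k j : ℕ) : Gf F :=
  algebraMap (MvPolynomial (ℕ × ℕ × ℕ) F) (Gf F) (MvPolynomial.X (i, k, j))

/-- The Raz–Yehudayoff polynomials `g_{i,j}` (first argument is fuel; every
recursive call reduces `j - i` by at least 2, so fuel `N` suffices for `g_{1,N}`). -/
def RY (F : Type*) [Field F] : ℕ → ℕ → ℕ → MvPolynomial ℕ (Gf F)
  | 0, _, _ => 1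
  | fuel + 1, i, j =>
      if j < i then 1
      else (1 + X i * X j) * RY F fuel (i + 1) (j - 1)
        + ∑ k ∈ (Finset.Icc (i + 1) (j - 2)).filter (fun k => (k - i) % 2 = 1),
            C (wv F i k j) * RY F fuel i k * RY F fuel (k + 1) j

/-- The Raz–Yehudayoff polynomial `g = g_{1,N}`, in the variables `x_1, …, x_N`. -/
def razPoly (F : Type*) [Field F] (N : ℕ) : MvPolynomial ℕ (Gf F) := RY F N 1 N

/-- `|φ(S) ∩ Y|` for a partition function φ. -/
def yCount {h : ℕ} (φ : ℕ → Fin h ⊕ Fin h) (S : Finset ℕ) : ℕ :=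
  (S.filter fun x => (φ x).isLeft = true).card

/-- `|φ(S) ∩ Z|` for a partition function φ. -/
def zCount {h : ℕ} (φ : ℕ → Fin h ⊕ Fin h) (S : Finset ℕ) : ℕ :=
  (S.filter fun x => (φ x).isRight = true).card

/-- `S` is `k`-unbalanced with respect to the partition φ. -/
def kUnb {h : ℕ} (φ : ℕ → Fin h ⊕ Fin h) (k : ℕ) (S : Finset ℕ) : Prop :=
  (k : ℤ) ≤ |(yCount φ S : ℤ) - (zCount φ S : ℤ)|

/-- Extension of a partition given on `X` to all of ℕ (junk value elsewhere). -/
def extPart {h : ℕ} (hh : 0 < h) (X : Finset ℕ) (e : {x // x ∈ X} → Fin h ⊕ Fin h) :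
    ℕ → Fin h ⊕ Fin h := fun x =>
  if hx : x ∈ X then e ⟨x, hx⟩ else Sum.inl ⟨0, hh⟩

/-- Probability of an event under the uniform distribution on a finite type. -/
def unifProb {Ω : Type*} [Fintype Ω] (p : Ω → Prop) : ℝ :=
  haveI := Classical.decPred p
  ((Finset.univ.filter p).card : ℝ) / (Fintype.card Ω : ℝ)

/-- The (1,1) entry of the product `M 0 * M 1 * ⋯ * M (n-1)`. -/
def mprodVal {K : Type*} [CommSemiring K] {n w : ℕ} (hw : 0 < w)
    (M : Fin n → Matrix (Fin w) (Fin w) (MvPolynomial ℕ K)) : MvPolynomial ℕ K :=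
  (List.ofFn M).prod ⟨0, hw⟩ ⟨0, hw⟩

/-- An oblivious read-once ABP of width `w` in variables `x_1, …, x_N` with
variable order π (a permutation of `{1, …, N}`): the ℓ-th layer matrix has
entries of degree at most 1 in the single variable `x_{π(ℓ)}`. -/
def IsROABP {K : Type*} [CommSemiring K] (N w : ℕ) (π : ℕ → ℕ)
    (M : Fin N → Matrix (Fin w) (Fin w) (MvPolynomial ℕ K)) : Prop :=
  Set.BijOn π (Set.Icc 1 N) (Set.Icc 1 N) ∧
    ∀ ℓ : Fin N, ∀ i j, ∃ a b : K, M ℓ i j = C a + C b * X (π (ℓ.val + 1))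

/-- An `r`-pass syntactically multilinear ABP of width `w`. -/
def IsRPass {K : Type*} [CommSemiring K] (N w r : ℕ) (π : Fin r → ℕ → ℕ)
    (M : Fin (r * N) → Matrix (Fin w) (Fin w) (MvPolynomial ℕ K)) : Prop :=
  (∀ j, Set.BijOn (π j) (Set.Icc 1 N) (Set.Icc 1 N)) ∧
  (∀ ℓ : Fin (r * N), ∀ i j, ∃ a b : K,
      M ℓ i j = C a + C b *
        X (π ⟨ℓ.val / N, Nat.div_lt_of_lt_mul (by rw [Nat.mul_comm N r]; exact ℓ.2)⟩
            (ℓ.val % N + 1))) ∧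
  (∀ (idx : Fin (r * N + 1) → Fin w) (v : ℕ) (ℓ₁ ℓ₂ : Fin (r * N)),
      v ∈ (M ℓ₁ (idx ℓ₁.castSucc) (idx ℓ₁.succ)).vars →
      v ∈ (M ℓ₂ (idx ℓ₂.castSucc) (idx ℓ₂.succ)).vars → ℓ₁ = ℓ₂)

/-- An α-sparse ROABP with variable blocks `Xs 0, …, Xs (d-1)`, width `w` and
sparsity `t`: every entry of the `i`-th matrix is a multilinear polynomial in the
variables `Xs i` with at most `t` monomials. -/
def IsSparseROABP {K : Type*} [CommSemiring K] {d : ℕ} (w t : ℕ)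
    (Xs : Fin d → Finset ℕ) (M : Fin d → Matrix (Fin w) (Fin w) (MvPolynomial ℕ K)) : Prop :=
  ∀ ℓ i j, MLin (M ℓ i j) ∧ (M ℓ i j).vars ⊆ Xs ℓ ∧ (M ℓ i j).support.card ≤ t

/-!
The complexity measure is the rank of the partial derivative matrix of a polynomial with respect to
a partition of the variables into row and column variables.

For every balanced partition the matrix of `g` has full rank. By induction on the interval, if its
end points lie on different sides of the partition, specialize all top weights to zero; otherwise
the imbalance of the initial segments changes sign, so the interval splits into two balanced ones,
and the weight of that split can be made dominant. In both cases the leading term is a product in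
disjoint variables, whose matrix is a Kronecker product of nonsingular matrices.

An ROABP of width `w` can be cut after any prefix of its variable order, which makes it a sum of `w`
products; if the prefix has imbalance at least `q`, each product, and hence the ROABP up to the
factor `w`, has a matrix of rank at most `2 ^ (-q)` times the full rank.

It remains to find a single balanced partition for which every one of the `m` orders has an
unbalanced prefix. Cut each order into `2 q + 1` blocks of length `4 (2 q + 1) ^ 2`. A uniformly
random subset leaves a given block nearly balanced with probability at most `1 / 2`, so it leaves
all blocks of one order nearly balanced with probability at most `2 ^ (-(2 q + 1))`, and a random
subset is balanced with probability at least `1 / N`. Hence a union bound succeeds if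
`m N < 2 ^ (2 q + 1)`, and a block of imbalance greater than `2 q` starts or ends at a prefix of
imbalance greater than `q`. With `q` close to `N ^ (1 / 3) / 4` this bounds the sum of the widths
from below by `2 ^ (q + 1)`.
-/

section MultilinearCoeff

variable {σ R S : Type*} [CommSemiring R] [CommSemiring S]

/-- The exponent of the squarefree monomial `∏ i ∈ T, X i`. -/
def squarefreeExponent (T : Finset σ) : σ →₀ ℕ := Finsupp.indicator T fun _ _ => 1

/-- The coefficient of the squarefree monomial `∏ i ∈ T, X i`, as a linear functional. -/
def multilinearCoeff (T : Finset σ) : MvPolynomial σ R →ₗ[R] R := lcoeff R (squarefreeExponent T)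

lemma multilinearCoeff_apply (T : Finset σ) (P : MvPolynomial σ R) :
    multilinearCoeff T P = P.coeff (squarefreeExponent T) := rfl

lemma squarefreeExponent_apply [DecidableEq σ] (T : Finset σ) (x : σ) :
    squarefreeExponent T x = if x ∈ T then 1 else 0 := by
  simp [squarefreeExponent, Finsupp.indicator_apply]

lemma squarefreeExponent_injective :
    Function.Injective (squarefreeExponent : Finset σ → σ →₀ ℕ) := by
  classical
  intro T T' h
  ext x
  have hx := DFunLike.congr_fun h x
  simp only [squarefreeExponent_apply] at hx
  split_ifs at hx <;> simp_all

lemma squarefreeExponent_union [DecidableEq σ] {T T' : Finset σ} (h : Disjoint T T') :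
    squarefreeExponent (T ∪ T') = squarefreeExponent T + squarefreeExponent T' := by
  ext x
  have hx : x ∈ T → x ∉ T' := fun hxT => Finset.disjoint_left.1 h hxT
  simp only [Finsupp.add_apply, squarefreeExponent_apply, Finset.mem_union]
  split_ifs <;> simp_all

lemma multilinearCoeff_map (φ : R →+* S) (T : Finset σ) (P : MvPolynomial σ R) :
    multilinearCoeff T (map φ P) = φ (multilinearCoeff T P) :=
  coeff_map φ P _

lemma multilinearCoeff_one [DecidableEq σ] (T : Finset σ) :
    multilinearCoeff T (1 : MvPolynomial σ R) = if T = ∅ then 1 else 0 := by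
  have hone : (1 : MvPolynomial σ R) = monomial (squarefreeExponent ∅) 1 := by
    rw [show squarefreeExponent (∅ : Finset σ) = 0 by ext; simp [squarefreeExponent_apply]]
    rfl
  rw [hone, multilinearCoeff_apply, coeff_monomial]
  simp only [squarefreeExponent_injective.eq_iff, eq_comm]

lemma multilinearCoeff_X_mul_X [DecidableEq σ] {i j : σ} (hij : i ≠ j) (T : Finset σ) :
    multilinearCoeff T (X i * X j : MvPolynomial σ R) = if T = {i, j} then 1 else 0 := by
  have hsingle (x : σ) : squarefreeExponent {x} = Finsupp.single x 1 := by
    ext y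
    simp [squarefreeExponent_apply, Finsupp.single_apply, eq_comm]
  have hX : (X i * X j : MvPolynomial σ R) = monomial (squarefreeExponent {i, j}) 1 := by
    rw [X, X, monomial_mul, mul_one, Finset.insert_eq,
      squarefreeExponent_union (Finset.disjoint_singleton.2 hij), hsingle, hsingle]
  rw [hX, multilinearCoeff_apply, coeff_monomial]
  simp only [squarefreeExponent_injective.eq_iff, eq_comm]

lemma eq_zero_of_mem_supported {U : Set σ} {P : MvPolynomial σ R} (hP : P ∈ supported R U)
    {d : σ →₀ ℕ} (hd : P.coeff d ≠ 0) {x : σ} (hx : x ∉ U) : d x = 0 := by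
  by_contra hdx
  exact hx <| mem_supported.1 hP <| Finset.mem_coe.2 <|
    (mem_vars_iff_mem_support x).2 ⟨d, mem_support_iff.2 hd, Finsupp.mem_support_iff.2 hdx⟩

lemma multilinearCoeff_mul [DecidableEq σ] {U V : Finset σ} (hUV : Disjoint U V)
    {P Q : MvPolynomial σ R} (hP : P ∈ supported R (U : Set σ)) (hQ : Q ∈ supported R (V : Set σ))
    {T : Finset σ} (hT : T ⊆ U ∪ V) :
    multilinearCoeff T (P * Q) = multilinearCoeff (T ∩ U) P * multilinearCoeff (T ∩ V) Q := by
  have hsum : squarefreeExponent T =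
      squarefreeExponent (T ∩ U) + squarefreeExponent (T ∩ V) := by
    rw [← squarefreeExponent_union (hUV.mono Finset.inter_subset_right Finset.inter_subset_right),
      ← Finset.inter_union_distrib_left, Finset.inter_eq_left.2 hT]
  simp only [multilinearCoeff_apply]
  rw [coeff_mul]
  refine Finset.sum_eq_single (squarefreeExponent (T ∩ U), squarefreeExponent (T ∩ V)) ?_ ?_
  · rintro ⟨d, e⟩ hde hne
    by_contra hmul
    obtain ⟨hd, he⟩ := ne_zero_and_ne_zero_of_mul hmul
    have hde' : d + e = squarefreeExponent T := Finset.HasAntidiagonal.mem_antidiagonal.1 hde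
    have hdU : d = squarefreeExponent (T ∩ U) := by
      ext x
      have hx := DFunLike.congr_fun hde' x
      by_cases hxU : x ∈ U
      · have hex : e x = 0 := eq_zero_of_mem_supported hQ he (Finset.disjoint_left.1 hUV hxU)
        simpa [squarefreeExponent_apply, hex, hxU] using hx
      · simpa [squarefreeExponent_apply, hxU] using eq_zero_of_mem_supported hP hd hxU
    subst hdU
    exact hne (Prod.ext rfl (add_left_cancel (hde'.trans hsum)))
  · exact fun h => absurd (Finset.HasAntidiagonal.mem_antidiagonal.2 hsum.symm) h

end MultilinearCoeff

open scoped Kronecker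

section IsNonsingular

variable {R S m n m' n' : Type*} [CommRing R] [CommRing S]
variable [Fintype m] [DecidableEq m] [Fintype m'] [DecidableEq m']

/-- A matrix whose rows and columns are indexed by different types is nonsingular if it becomes
square of nonzero determinant after an identification of the two index types; up to sign the
determinant does not depend on the identification. -/
def IsNonsingular (M : Matrix m n R) : Prop :=
  ∃ e : m ≃ n, (M.submatrix id e).det ≠ 0

lemma isNonsingular_submatrix_equiv {M : Matrix m n R} (e₁ : m' ≃ m) (e₂ : n' ≃ n)
    (hM : IsNonsingular M) : IsNonsingular (M.submatrix e₁ e₂) := by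
  obtain ⟨e, he⟩ := hM
  refine ⟨(e₁.trans e).trans e₂.symm, ?_⟩
  rw [← Matrix.det_submatrix_equiv_self e₁] at he
  convert he using 2
  ext
  simp

lemma IsNonsingular.kronecker [IsDomain R] {M : Matrix m n R} {M' : Matrix m' n' R}
    (hM : IsNonsingular M) (hM' : IsNonsingular M') : IsNonsingular (M ⊗ₖ M') := by
  obtain ⟨e, he⟩ := hM
  obtain ⟨e', he'⟩ := hM'
  refine ⟨e.prodCongr e', ?_⟩
  change (M.submatrix id e ⊗ₖ M'.submatrix id e').det ≠ 0
  rw [Matrix.det_kronecker]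
  exact mul_ne_zero (pow_ne_zero _ he) (pow_ne_zero _ he')

lemma IsNonsingular.of_map {M : Matrix m n R} (φ : R →+* S) (hM : IsNonsingular (M.map φ)) :
    IsNonsingular M := by
  obtain ⟨e, he⟩ := hM
  refine ⟨e, fun h => he ?_⟩
  rw [Matrix.submatrix_map, ← RingHom.mapMatrix_apply, ← RingHom.map_det, h, map_zero]

lemma IsNonsingular.map {M : Matrix m n R} (hM : IsNonsingular M) {φ : R →+* S}
    (hφ : Function.Injective φ) : IsNonsingular (M.map φ) := by
  obtain ⟨e, he⟩ := hM
  refine ⟨e, ?_⟩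
  rwa [Matrix.submatrix_map, ← RingHom.mapMatrix_apply, ← RingHom.map_det, ne_eq,
    map_eq_zero_iff φ hφ]

lemma IsNonsingular.X_smul_map_C_add_map_C {B : Matrix m n R} (hB : IsNonsingular B)
    (A : Matrix m n R) : IsNonsingular
      ((Polynomial.X : Polynomial R) • B.map Polynomial.C + A.map Polynomial.C) := by
  obtain ⟨e, he⟩ := hB
  refine ⟨e, fun h => he ?_⟩
  rw [← Polynomial.coeff_det_X_add_C_card _ (A.submatrix id e)]
  exact (congrArg (Polynomial.coeff · _) h).trans (Polynomial.coeff_zero _)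

lemma IsNonsingular.rank_eq_card [IsDomain R] [Fintype n] {M : Matrix m n R}
    (hM : IsNonsingular M) : M.rank = Fintype.card m := by
  obtain ⟨e, he⟩ := hM
  rw [← Matrix.rank_of_det_ne_zero he]
  exact (M.rank_submatrix (.refl m) e).symm

end IsNonsingular

section Rank

lemma rank_kronecker_le_card_width_mul_card_height {R m n p q : Type*} [CommRing R] [Nontrivial R]
    [Fintype n] [Fintype p] [Fintype q] (A : Matrix m n R) (B : Matrix p q R) :
    (A ⊗ₖ B).rank ≤ Fintype.card n * Fintype.card p := by
  classical
  have h : A ⊗ₖ B = (A ⊗ₖ (1 : Matrix p p R)) * ((1 : Matrix n n R) ⊗ₖ B) := by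
    rw [← Matrix.mul_kronecker_mul, Matrix.mul_one, Matrix.one_mul]
  calc (A ⊗ₖ B).rank ≤ (A ⊗ₖ (1 : Matrix p p R)).rank := h ▸ Matrix.rank_mul_le_left _ _
    _ ≤ Fintype.card (n × p) := Matrix.rank_le_card_width _
    _ = Fintype.card n * Fintype.card p := Fintype.card_prod n p

lemma rank_kronecker_le_card_height_mul_card_width {R m n p q : Type*} [CommRing R] [Nontrivial R]
    [Fintype m] [Fintype n] [Fintype q] (A : Matrix m n R) (B : Matrix p q R) :
    (A ⊗ₖ B).rank ≤ Fintype.card m * Fintype.card q := by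
  classical
  have h : A ⊗ₖ B = ((1 : Matrix m m R) ⊗ₖ B) * (A ⊗ₖ (1 : Matrix q q R)) := by
    rw [← Matrix.mul_kronecker_mul, Matrix.mul_one, Matrix.one_mul]
  calc (A ⊗ₖ B).rank ≤ ((1 : Matrix m m R) ⊗ₖ B).rank := h ▸ Matrix.rank_mul_le_left _ _
    _ ≤ Fintype.card (m × q) := Matrix.rank_le_card_width _
    _ = Fintype.card m * Fintype.card q := Fintype.card_prod m q

lemma rank_matrix_add_le {K m n : Type*} [Field K] [Fintype n] (A B : Matrix m n K) :
    (A + B).rank ≤ A.rank + B.rank := by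
  rw [Matrix.rank, Matrix.mulVecLin_add]
  refine le_trans (Submodule.finrank_mono ?_) (Submodule.finrank_add_le_finrank_add_finrank _ _)
  exact LinearMap.range_add_le _ _

lemma rank_matrix_sum_le {ι K m n : Type*} [Field K] [Fintype n] (s : Finset ι)
    (M : ι → Matrix m n K) : (∑ i ∈ s, M i).rank ≤ ∑ i ∈ s, (M i).rank :=
  Finset.le_sum_of_subadditive (Matrix.rank (R := K)) Matrix.rank_zero.le rank_matrix_add_le s M

end Rank

section PartialDerivMatrix

variable {σ R : Type*} [DecidableEq σ]

/-- A subset of the disjoint union of `A` and `B` is a subset of `A` together with one of `B`. -/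
def powersetEquivProd {A B C : Finset σ} (hC : A ∪ B = C) (hAB : Disjoint A B) :
    C.powerset ≃ A.powerset × B.powerset where
  toFun T := (⟨T ∩ A, Finset.mem_powerset.2 Finset.inter_subset_right⟩,
    ⟨T ∩ B, Finset.mem_powerset.2 Finset.inter_subset_right⟩)
  invFun T := ⟨T.1 ∪ T.2, Finset.mem_powerset.2 <| hC ▸ Finset.union_subset_union
    (Finset.mem_powerset.1 T.1.2) (Finset.mem_powerset.1 T.2.2)⟩
  left_inv T := Subtype.ext <| by
    change ↑T ∩ A ∪ ↑T ∩ B = (T : Finset σ)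
    rw [← Finset.inter_union_distrib_left, hC, Finset.inter_eq_left.2 (Finset.mem_powerset.1 T.2)]
  right_inv := by
    rintro ⟨⟨T, hT⟩, ⟨T', hT'⟩⟩
    rw [Finset.mem_powerset] at hT hT'
    have hTB : T ∩ B = ∅ := Finset.disjoint_iff_inter_eq_empty.1 (hAB.mono_left hT)
    have hTA : T' ∩ A = ∅ := Finset.disjoint_iff_inter_eq_empty.1 (hAB.symm.mono_left hT')
    simp only [Finset.union_inter_distrib_right, hTA, hTB,
      Finset.inter_eq_left.2 hT, Finset.inter_eq_left.2 hT', Finset.union_empty,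
      Finset.empty_union]

section CommSemiring

variable [CommSemiring R]

/-- The partial derivative matrix of a polynomial in the variables `U`, for the partition of `U`
into the row variables `U ∩ S` and the column variables `U \ S`: the entry at `(A, B)` is the
coefficient of the squarefree monomial with variables `A ∪ B`. -/
def partialDerivMatrix (S U : Finset σ) :
    MvPolynomial σ R →ₗ[R] Matrix (U ∩ S).powerset (U \ S).powerset R :=
  (Matrix.ofLinearEquiv R).toLinearMap ∘ₗ
    LinearMap.pi fun A => LinearMap.pi fun B => multilinearCoeff (A.1 ∪ B.1)

variable {S U V : Finset σ}

lemma partialDerivMatrix_map {R' : Type*} [CommSemiring R'] (φ : R →+* R') (P : MvPolynomial σ R) :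
    partialDerivMatrix S U (map φ P) = (partialDerivMatrix S U P).map φ := by
  ext
  exact multilinearCoeff_map φ _ P

lemma partialDerivMatrix_mul (hUV : Disjoint U V) {P Q : MvPolynomial σ R}
    (hP : P ∈ supported R (U : Set σ)) (hQ : Q ∈ supported R (V : Set σ)) :
    partialDerivMatrix S (U ∪ V) (P * Q) =
      (partialDerivMatrix S U P ⊗ₖ partialDerivMatrix S V Q).submatrix
        (powersetEquivProd (Finset.union_inter_distrib_right U V S).symm
          (hUV.mono Finset.inter_subset_left Finset.inter_subset_left))
        (powersetEquivProd (Finset.union_sdiff_distrib U V S).symm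
          (hUV.mono Finset.sdiff_subset Finset.sdiff_subset)) := by
  ext ⟨A, hA⟩ ⟨B, hB⟩
  rw [Finset.mem_powerset] at hA hB
  have hAB : A ∪ B ⊆ U ∪ V :=
    Finset.union_subset (hA.trans Finset.inter_subset_left) (hB.trans Finset.sdiff_subset)
  have hU : (A ∪ B) ∩ U = A ∩ (U ∩ S) ∪ B ∩ (U \ S) := by grind
  have hV : (A ∪ B) ∩ V = A ∩ (V ∩ S) ∪ B ∩ (V \ S) := by grind
  refine (multilinearCoeff_mul hUV hP hQ hAB).trans ?_
  rw [hU, hV]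
  rfl

end CommSemiring

variable {S U V : Finset σ}

lemma isNonsingular_partialDerivMatrix_mul [CommRing R] [IsDomain R] (hUV : Disjoint U V)
    {P Q : MvPolynomial σ R} (hP : P ∈ supported R (U : Set σ)) (hQ : Q ∈ supported R (V : Set σ))
    (hPU : IsNonsingular (partialDerivMatrix S U P))
    (hQV : IsNonsingular (partialDerivMatrix S V Q)) :
    IsNonsingular (partialDerivMatrix S (U ∪ V) (P * Q)) := by
  rw [partialDerivMatrix_mul hUV hP hQ]
  exact isNonsingular_submatrix_equiv _ _ (hPU.kronecker hQV)

lemma isNonsingular_partialDerivMatrix_one_add_X_mul_X [CommRing R] [Nontrivial R] {y z : σ}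
    (hy : y ∈ S) (hz : z ∉ S) :
    IsNonsingular (partialDerivMatrix S {y, z} (1 + X y * X z : MvPolynomial σ R)) := by
  have hyz : y ≠ z := by grind
  have hne (x : σ) : ({x} : Finset σ) ≠ {y, z} := fun h => by
    simpa [Finset.card_pair hyz] using congrArg Finset.card h
  have hne' : ({y, z} : Finset σ) ≠ ∅ := Finset.insert_ne_empty y {z}
  have hY : ({y, z} : Finset σ) ∩ S = {y} := by grind
  have hZ : ({y, z} : Finset σ) \ S = {z} := by grind
  let e : (({y, z} : Finset σ) ∩ S).powerset ≃ (({y, z} : Finset σ) \ S).powerset :=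
    (Equiv.swap y z).finsetCongr.subtypeEquiv fun A => by
      have hswap : ({z} : Finset σ) = ({y} : Finset σ).map (Equiv.swap y z).toEmbedding := by simp
      rw [hY, hZ, Finset.mem_powerset, Finset.mem_powerset, Equiv.finsetCongr_apply, hswap,
        Finset.map_subset_map]
  refine ⟨e, ?_⟩
  suffices hone : (partialDerivMatrix S {y, z} (1 + X y * X z : MvPolynomial σ R)).submatrix id e
      = 1 by rw [hone, Matrix.det_one]; exact one_ne_zero
  ext ⟨A, hA⟩ ⟨B, hB⟩
  change multilinearCoeff (A ∪ e ⟨B, hB⟩) (1 + X y * X z : MvPolynomial σ R) = _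
  rw [map_add, multilinearCoeff_one, multilinearCoeff_X_mul_X hyz]
  rw [hY, Finset.mem_powerset, Finset.subset_singleton_iff] at hA hB
  obtain rfl | rfl := hA <;> obtain rfl | rfl := hB <;> simp [e, hne, hne', hne'.symm]

lemma isNonsingular_partialDerivMatrix_empty_one [CommRing R] [Nontrivial R] (S : Finset σ) :
    IsNonsingular (partialDerivMatrix S ∅ (1 : MvPolynomial σ R)) := by
  let e : ((∅ : Finset σ) ∩ S).powerset ≃ ((∅ : Finset σ) \ S).powerset :=
    Equiv.subtypeEquivRight fun A => by rw [Finset.empty_inter, Finset.empty_sdiff]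
  refine ⟨e, ?_⟩
  suffices hone : (partialDerivMatrix S ∅ (1 : MvPolynomial σ R)).submatrix id e = 1 by
    rw [hone, Matrix.det_one]
    exact one_ne_zero
  ext ⟨A, hA⟩ ⟨B, hB⟩
  obtain rfl : A = ∅ := by simpa using hA
  obtain rfl : B = ∅ := by simpa using hB
  refine (multilinearCoeff_one _).trans ?_
  simp [e]

lemma rank_partialDerivMatrix_mul_le [Field R] (hUV : Disjoint U V) {P Q : MvPolynomial σ R}
    (hP : P ∈ supported R (U : Set σ)) (hQ : Q ∈ supported R (V : Set σ)) :
    (partialDerivMatrix S (U ∪ V) (P * Q)).rank ≤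
      min (2 ^ ((U \ S).card + (V ∩ S).card)) (2 ^ ((U ∩ S).card + (V \ S).card)) := by
  rw [partialDerivMatrix_mul hUV hP hQ, Matrix.rank_submatrix]
  simpa only [Fintype.card_coe, Finset.card_powerset, ← pow_add] using
    le_min (rank_kronecker_le_card_width_mul_card_height (partialDerivMatrix S U P)
        (partialDerivMatrix S V Q))
      (rank_kronecker_le_card_height_mul_card_width (partialDerivMatrix S U P)
        (partialDerivMatrix S V Q))

end PartialDerivMatrix

section Imbalance

variable {σ : Type*} [DecidableEq σ] {S U V : Finset σ}

/-- The difference between the numbers of elements of `U` inside and outside `S`: its number of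
row variables minus its number of column variables. -/
def imbalance (S U : Finset σ) : ℤ := (U ∩ S).card - (U \ S).card

lemma imbalance_union (hUV : Disjoint U V) :
    imbalance S (U ∪ V) = imbalance S U + imbalance S V := by
  simp only [imbalance, Finset.union_inter_distrib_right, Finset.union_sdiff_distrib]
  rw [Finset.card_union_of_disjoint (hUV.mono Finset.inter_subset_left Finset.inter_subset_left),
    Finset.card_union_of_disjoint (hUV.mono Finset.sdiff_subset Finset.sdiff_subset)]
  push_cast
  ring

lemma imbalance_singleton (S : Finset σ) (x : σ) :
    imbalance S {x} = if x ∈ S then 1 else -1 := by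
  by_cases hx : x ∈ S <;>
    simp [imbalance, hx, Finset.singleton_inter_of_mem,
      Finset.singleton_inter_of_notMem, Finset.sdiff_eq_self_of_disjoint]

lemma card_eq_two_mul_add_imbalance (S U : Finset σ) :
    (U.card : ℤ) = 2 * (U \ S).card + imbalance S U := by
  rw [imbalance, ← Finset.card_inter_add_card_sdiff U S]
  push_cast
  ring

end Imbalance

lemma exists_eq_of_mem_uIcc_of_abs_sub_le_one {f : ℕ → ℤ} {a b : ℕ} (hab : a ≤ b)
    (hf : ∀ k, a ≤ k → k < b → |f (k + 1) - f k| ≤ 1) {c : ℤ} (hc : c ∈ Set.uIcc (f a) (f b)) :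
    ∃ k, a ≤ k ∧ k ≤ b ∧ f k = c := by
  induction b, hab using Nat.le_induction with
  | base => exact ⟨a, le_rfl, le_rfl, by simpa [eq_comm] using hc⟩
  | succ b hab ih =>
    by_cases hcb : c = f (b + 1)
    · exact ⟨b + 1, by lia, le_rfl, hcb.symm⟩
    · have hstep := abs_le.1 (hf b hab (by lia))
      have hc' : c ∈ Set.uIcc (f a) (f b) := by
        rw [Set.mem_uIcc] at hc ⊢
        lia
      obtain ⟨k, hak, hkb, hk⟩ := ih (fun k hak hkb => hf k hak (by lia)) hc'
      exact ⟨k, hak, by lia, hk⟩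

section Interval

variable {S : Finset ℕ} {i j k : ℕ}

lemma Icc_eq_pair_union_Icc (hij : i < j) :
    Finset.Icc i j = {i, j} ∪ Finset.Icc (i + 1) (j - 1) := by
  ext x
  simp only [Finset.mem_Icc, Finset.mem_union, Finset.mem_insert, Finset.mem_singleton]
  lia

lemma disjoint_pair_Icc (hij : i < j) : Disjoint {i, j} (Finset.Icc (i + 1) (j - 1)) := by
  simp only [Finset.disjoint_insert_left, Finset.disjoint_singleton_left, Finset.mem_Icc]
  lia

lemma Icc_eq_Icc_union_Icc (hik : i ≤ k) (hkj : k ≤ j) :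
    Finset.Icc i j = Finset.Icc i k ∪ Finset.Icc (k + 1) j := by
  ext x
  simp only [Finset.mem_Icc, Finset.mem_union]
  lia

lemma disjoint_Icc_Icc_succ (i k j : ℕ) : Disjoint (Finset.Icc i k) (Finset.Icc (k + 1) j) := by
  rw [Finset.disjoint_left]
  intro x hx
  simp only [Finset.mem_Icc] at hx ⊢
  lia

lemma imbalance_Icc_succ (S : Finset ℕ) (hik : i ≤ k + 1) :
    imbalance S (Finset.Icc i (k + 1)) = imbalance S (Finset.Icc i k) + imbalance S {k + 1} := by
  rw [← imbalance_union (by simp), Finset.union_comm, ← Finset.insert_eq,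
    Finset.insert_Icc_right_eq_Icc_add_one hik]

lemma imbalance_Icc_of_color_ne (hij : i < j) (hcol : ¬(i ∈ S ↔ j ∈ S)) :
    imbalance S (Finset.Icc i j) = imbalance S (Finset.Icc (i + 1) (j - 1)) := by
  rw [Icc_eq_pair_union_Icc hij, imbalance_union (disjoint_pair_Icc hij), Finset.insert_eq,
    imbalance_union (by simpa using hij.ne), imbalance_singleton, imbalance_singleton]
  split_ifs <;> first | tauto | simp

lemma exists_imbalance_Icc_eq_zero (hij : i < j) (hbal : imbalance S (Finset.Icc i j) = 0)
    (hcol : i ∈ S ↔ j ∈ S) :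
    ∃ k, i + 1 ≤ k ∧ k ≤ j - 2 ∧ (k - i) % 2 = 1 ∧ imbalance S (Finset.Icc i k) = 0 := by
  obtain ⟨j, rfl⟩ : ∃ j', j = j' + 1 := ⟨j - 1, by lia⟩
  have hstep (k : ℕ) (hik : i ≤ k) : |imbalance S (Finset.Icc i (k + 1)) -
      imbalance S (Finset.Icc i k)| ≤ 1 := by
    rw [imbalance_Icc_succ S (by lia), add_sub_cancel_left, imbalance_singleton]
    split_ifs <;> simp
  have hleft : imbalance S (Finset.Icc i i) = if i ∈ S then 1 else -1 := by
    rw [Finset.Icc_self, imbalance_singleton]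
  have hright : imbalance S (Finset.Icc i j) = if i ∈ S then -1 else 1 := by
    rw [imbalance_Icc_succ S hij.le, imbalance_singleton] at hbal
    simp only [← hcol] at hbal
    split_ifs at hbal ⊢ <;> lia
  have hzero : (0 : ℤ) ∈
      Set.uIcc (imbalance S (Finset.Icc i i)) (imbalance S (Finset.Icc i j)) := by
    rw [hleft, hright, Set.mem_uIcc]
    split_ifs <;> simp
  obtain ⟨k, hik, hkj, hk⟩ :=
    exists_eq_of_mem_uIcc_of_abs_sub_le_one (f := fun k => imbalance S (Finset.Icc i k))
      (by lia) (fun k hik _ => hstep k hik) hzero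
  have hki : k ≠ i := by
    rintro rfl
    split_ifs at hleft <;> lia
  have hkj' : k ≠ j := by
    rintro rfl
    split_ifs at hright <;> lia
  have hcard := card_eq_two_mul_add_imbalance S (Finset.Icc i k)
  rw [hk, Nat.card_Icc] at hcard
  exact ⟨k, by lia, by lia, by lia, hk⟩

end Interval

section IntervalPoly

variable {R R' : Type*} [CommSemiring R] [CommSemiring R']

/-- The polynomials `g_{i,j}` of Raz and Yehudayoff with the weights `w i k j` in an arbitrary
semiring, for all intervals `[i, j]`. -/
def intervalPoly (w : ℕ → ℕ → ℕ → R) (i j : ℕ) : MvPolynomial ℕ R :=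
  if j < i then 1
  else (1 + X i * X j) * intervalPoly w (i + 1) (j - 1) +
    ∑ k ∈ ((Finset.Icc (i + 1) (j - 2)).filter fun k => (k - i) % 2 = 1).attach,
      C (w i k j) * intervalPoly w i k * intervalPoly w (k + 1) j
termination_by j + 1 - i
decreasing_by
  · lia
  all_goals
    have := Finset.mem_Icc.1 (Finset.mem_filter.1 k.2).1
    lia

lemma intervalPoly_of_lt (w : ℕ → ℕ → ℕ → R) {i j : ℕ} (hij : j < i) : intervalPoly w i j = 1 := by
  rw [intervalPoly, if_pos hij]

lemma intervalPoly_of_le (w : ℕ → ℕ → ℕ → R) {i j : ℕ} (hij : i ≤ j) :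
    intervalPoly w i j = (1 + X i * X j) * intervalPoly w (i + 1) (j - 1) +
      ∑ k ∈ (Finset.Icc (i + 1) (j - 2)).filter (fun k => (k - i) % 2 = 1),
        C (w i k j) * intervalPoly w i k * intervalPoly w (k + 1) j := by
  rw [intervalPoly, if_neg (by lia)]
  congr 1
  exact Finset.sum_attach _ fun k => C (w i k j) * intervalPoly w i k * intervalPoly w (k + 1) j

lemma intervalPoly_mem_supported (w : ℕ → ℕ → ℕ → R) (i j : ℕ) :
    intervalPoly w i j ∈ supported R (Finset.Icc i j : Set ℕ) := by
  have hmono {a b c d : ℕ} (hca : c ≤ a) (hbd : b ≤ d) :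
      supported R (Finset.Icc a b : Set ℕ) ≤ supported R (Finset.Icc c d : Set ℕ) :=
    supported_mono (Finset.coe_subset.2 (Finset.Icc_subset_Icc hca hbd))
  have hX {x a b : ℕ} (hax : a ≤ x) (hxb : x ≤ b) :
      (X x : MvPolynomial ℕ R) ∈ supported R (Finset.Icc a b : Set ℕ) :=
    Algebra.subset_adjoin ⟨x, by simpa using ⟨hax, hxb⟩, rfl⟩
  fun_induction intervalPoly w i j with
  | case1 => exact one_mem _
  | case2 i j hij ihtop ihleft ihright =>
    refine add_mem (mul_mem (add_mem (one_mem _) (mul_mem (hX (by lia) (by lia))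
      (hX (by lia) (by lia)))) (hmono (by lia) (by lia) ihtop)) (sum_mem fun k _ => ?_)
    have hk := Finset.mem_Icc.1 (Finset.mem_filter.1 k.2).1
    exact mul_mem (mul_mem (Subalgebra.algebraMap_mem _ _) (hmono (by lia) (by lia) (ihleft k)))
      (hmono (by lia) (by lia) (ihright k))

lemma map_intervalPoly (φ : R →+* R') (w : ℕ → ℕ → ℕ → R) (i j : ℕ) :
    map φ (intervalPoly w i j) = intervalPoly (fun a b c => φ (w a b c)) i j := by
  fun_induction intervalPoly w i j with
  | case1 i j hij => rw [intervalPoly_of_lt _ hij, map_one]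
  | case2 i j hij ihtop ihleft ihright =>
    rw [intervalPoly.eq_def (fun a b c => φ (w a b c)) i j, if_neg hij]
    simp only [map_add, map_mul, map_one, map_X, map_sum, map_C, ihtop, ihleft, ihright]

lemma intervalPoly_congr {w w' : ℕ → ℕ → ℕ → R} {i j : ℕ}
    (hw : ∀ a b c, i ≤ a → c ≤ j → w a b c = w' a b c) :
    intervalPoly w i j = intervalPoly w' i j := by
  fun_induction intervalPoly w i j with
  | case1 i j hij => rw [intervalPoly_of_lt _ hij]
  | case2 i j hij ihtop ihleft ihright =>
    rw [intervalPoly.eq_def w' i j, if_neg hij, ihtop fun a b c ha hc => hw a b c (by lia) (by lia)]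
    congr 1
    refine Finset.sum_congr rfl fun k _ => ?_
    have hk := Finset.mem_Icc.1 (Finset.mem_filter.1 k.2).1
    rw [hw i k j le_rfl le_rfl, ihleft k fun a b c ha hc => hw a b c ha (by lia),
      ihright k fun a b c ha hc => hw a b c (by lia) hc]

lemma RY_eq_intervalPoly (F : Type*) [Field F] {fuel i j : ℕ} (hfuel : j + 1 ≤ i + fuel) :
    RY F fuel i j = intervalPoly (wv F) i j := by
  induction fuel generalizing i j with
  | zero => rw [RY, intervalPoly_of_lt _ (by lia)]
  | succ fuel ih =>
    by_cases hij : j < i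
    · rw [RY, if_pos hij, intervalPoly_of_lt _ hij]
    · rw [RY, if_neg hij, intervalPoly_of_le _ (by lia), ih (by lia)]
      congr 1
      refine Finset.sum_congr rfl fun k hk => ?_
      have hk := Finset.mem_Icc.1 (Finset.mem_filter.1 hk).1
      rw [ih (by lia), ih (by lia)]

end IntervalPoly

section GenericIntervalPoly

variable {k : Type*} [CommRing k]

/-- The polynomial `g_{i,j}` whose weights are independent variables over `k`. -/
def genericIntervalPoly (k : Type*) [CommRing k] (i j : ℕ) :
    MvPolynomial ℕ (MvPolynomial (ℕ × ℕ × ℕ) k) :=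
  intervalPoly (fun a b c => X (a, b, c)) i j

/-- The specialization of the weights `w i l j` to `c l`, all the other weights being kept. -/
def specializeWeights (i j : ℕ) (c : ℕ → Polynomial (MvPolynomial (ℕ × ℕ × ℕ) k)) :
    MvPolynomial (ℕ × ℕ × ℕ) k →+* Polynomial (MvPolynomial (ℕ × ℕ × ℕ) k) :=
  eval₂Hom (Polynomial.C.comp C)
    fun p => if p.1 = i ∧ p.2.2 = j then c p.2.1 else Polynomial.C (X p)

lemma specializeWeights_X (i j a b c : ℕ) (t : ℕ → Polynomial (MvPolynomial (ℕ × ℕ × ℕ) k)) :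
    specializeWeights i j t (X (a, b, c)) =
      if a = i ∧ c = j then t b else Polynomial.C (X (a, b, c)) := by
  rw [specializeWeights, eval₂Hom_X']

lemma map_specializeWeights_of_lt (c : ℕ → Polynomial (MvPolynomial (ℕ × ℕ × ℕ) k))
    {i j a b : ℕ} (hab : i < a ∨ b < j) :
    map (specializeWeights i j c) (genericIntervalPoly k a b) =
      map Polynomial.C (genericIntervalPoly k a b) := by
  rw [genericIntervalPoly, map_intervalPoly, map_intervalPoly]
  refine intervalPoly_congr fun u v w hu hw => ?_
  rw [specializeWeights_X, if_neg (by lia)]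

lemma map_specializeWeights (c : ℕ → Polynomial (MvPolynomial (ℕ × ℕ × ℕ) k))
    {i j : ℕ} (hij : i ≤ j) :
    map (specializeWeights i j c) (genericIntervalPoly k i j) =
      map Polynomial.C ((1 + X i * X j) * genericIntervalPoly k (i + 1) (j - 1)) +
        ∑ l ∈ (Finset.Icc (i + 1) (j - 2)).filter (fun l => (l - i) % 2 = 1),
          c l • map Polynomial.C (genericIntervalPoly k i l * genericIntervalPoly k (l + 1) j) := by
  rw [genericIntervalPoly, intervalPoly_of_le _ hij, map_add, map_sum, map_mul, map_mul]
  refine congrArg₂ (· + ·) ?_ (Finset.sum_congr rfl fun l hl => ?_)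
  · rw [← genericIntervalPoly, map_specializeWeights_of_lt c (.inl (by lia))]
    simp only [map_add, map_mul, map_one, map_X]
  · have hl := Finset.mem_Icc.1 (Finset.mem_filter.1 hl).1
    rw [map_mul, map_mul, map_C, specializeWeights_X, if_pos ⟨rfl, rfl⟩, ← genericIntervalPoly,
      ← genericIntervalPoly, map_specializeWeights_of_lt c (.inr (by lia)),
      map_specializeWeights_of_lt c (.inl (by lia)), smul_eq_C_mul, map_mul, mul_assoc]

variable {S : Finset ℕ} {i j : ℕ}

lemma isNonsingular_of_pair (hij : i ≤ j)
    (h : IsNonsingular (partialDerivMatrix S (Finset.Icc i j)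
      ((1 + X i * X j) * genericIntervalPoly k (i + 1) (j - 1)))) :
    IsNonsingular (partialDerivMatrix S (Finset.Icc i j) (genericIntervalPoly k i j)) := by
  refine .of_map (specializeWeights i j 0) ?_
  rw [← partialDerivMatrix_map, map_specializeWeights _ hij]
  simp only [Pi.zero_apply, zero_smul, Finset.sum_const_zero, add_zero]
  rw [partialDerivMatrix_map]
  exact h.map Polynomial.C_injective

lemma isNonsingular_of_split {l : ℕ} (hil : i + 1 ≤ l) (hlj : l ≤ j - 2) (hodd : (l - i) % 2 = 1)
    (h : IsNonsingular (partialDerivMatrix S (Finset.Icc i j)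
      (genericIntervalPoly k i l * genericIntervalPoly k (l + 1) j))) :
    IsNonsingular (partialDerivMatrix S (Finset.Icc i j) (genericIntervalPoly k i j)) := by
  refine .of_map (specializeWeights i j (Pi.single l Polynomial.X)) ?_
  rw [← partialDerivMatrix_map, map_specializeWeights _ (by lia), Finset.sum_eq_single_of_mem l
    (by simp [hil, hlj, hodd]) fun b _ hb => by rw [Pi.single_eq_of_ne hb, zero_smul],
    Pi.single_eq_same, add_comm, map_add, map_smul, partialDerivMatrix_map, partialDerivMatrix_map]
  exact h.X_smul_map_C_add_map_C _

variable [IsDomain k]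

lemma isNonsingular_partialDerivMatrix_pair_mul (hij : i < j) (hcol : ¬(i ∈ S ↔ j ∈ S))
    (h : IsNonsingular
      (partialDerivMatrix S (Finset.Icc (i + 1) (j - 1)) (genericIntervalPoly k (i + 1) (j - 1)))) :
    IsNonsingular (partialDerivMatrix S (Finset.Icc i j)
      ((1 + X i * X j) * genericIntervalPoly k (i + 1) (j - 1))) := by
  have hpair : IsNonsingular (partialDerivMatrix S {i, j}
      (1 + X i * X j : MvPolynomial ℕ (MvPolynomial (ℕ × ℕ × ℕ) k))) := by
    by_cases hi : i ∈ S
    · exact isNonsingular_partialDerivMatrix_one_add_X_mul_X hi (by tauto)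
    · rw [Finset.pair_comm, mul_comm (X i)]
      exact isNonsingular_partialDerivMatrix_one_add_X_mul_X (by tauto) hi
  have hX (x : ℕ) (hx : x ∈ ({i, j} : Finset ℕ)) :
      (X x : MvPolynomial ℕ (MvPolynomial (ℕ × ℕ × ℕ) k)) ∈
        supported _ (({i, j} : Finset ℕ) : Set ℕ) :=
    Algebra.subset_adjoin ⟨x, hx, rfl⟩
  rw [Icc_eq_pair_union_Icc hij]
  refine isNonsingular_partialDerivMatrix_mul (disjoint_pair_Icc hij) ?_
    (intervalPoly_mem_supported _ _ _) hpair h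
  exact add_mem (one_mem _) (mul_mem (hX i (by simp)) (hX j (by simp)))

lemma isNonsingular_partialDerivMatrix_split_mul {l : ℕ} (hil : i ≤ l) (hlj : l < j)
    (hleft : IsNonsingular (partialDerivMatrix S (Finset.Icc i l) (genericIntervalPoly k i l)))
    (hright : IsNonsingular
      (partialDerivMatrix S (Finset.Icc (l + 1) j) (genericIntervalPoly k (l + 1) j))) :
    IsNonsingular (partialDerivMatrix S (Finset.Icc i j)
      (genericIntervalPoly k i l * genericIntervalPoly k (l + 1) j)) := by
  rw [Icc_eq_Icc_union_Icc hil hlj.le]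
  exact isNonsingular_partialDerivMatrix_mul (disjoint_Icc_Icc_succ i l j)
    (intervalPoly_mem_supported _ _ _) (intervalPoly_mem_supported _ _ _) hleft hright

theorem isNonsingular_partialDerivMatrix_genericIntervalPoly
    (hbal : imbalance S (Finset.Icc i j) = 0) :
    IsNonsingular (partialDerivMatrix S (Finset.Icc i j) (genericIntervalPoly k i j)) := by
  induction hn : j + 1 - i using Nat.strong_induction_on generalizing i j with
  | _ n ih =>
    obtain hji | rfl | hij := lt_trichotomy j i
    · rw [Finset.Icc_eq_empty (by lia), genericIntervalPoly, intervalPoly_of_lt _ hji]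
      exact isNonsingular_partialDerivMatrix_empty_one S
    · rw [Finset.Icc_self, imbalance_singleton] at hbal
      exact absurd hbal (by split_ifs <;> simp)
    by_cases hcol : i ∈ S ↔ j ∈ S
    · obtain ⟨l, hil, hlj, hodd, hl⟩ := exists_imbalance_Icc_eq_zero hij hbal hcol
      rw [Icc_eq_Icc_union_Icc (k := l) (by lia) (by lia),
        imbalance_union (disjoint_Icc_Icc_succ i l j), hl, zero_add] at hbal
      exact isNonsingular_of_split hil hlj hodd <|
        isNonsingular_partialDerivMatrix_split_mul (by lia) (by lia)
          (ih _ (by lia) hl rfl) (ih _ (by lia) hbal rfl)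
    · rw [imbalance_Icc_of_color_ne hij hcol] at hbal
      exact isNonsingular_of_pair hij.le <|
        isNonsingular_partialDerivMatrix_pair_mul hij hcol (ih _ (by lia) hbal rfl)

end GenericIntervalPoly

lemma isNonsingular_partialDerivMatrix_razPoly (F : Type*) [Field F] {N : ℕ} {S : Finset ℕ}
    (hbal : imbalance S (Finset.Icc 1 N) = 0) :
    IsNonsingular (partialDerivMatrix S (Finset.Icc 1 N) (razPoly F N)) := by
  have hgen : razPoly F N = map (algebraMap _ (Gf F)) (genericIntervalPoly F 1 N) := by
    rw [razPoly, RY_eq_intervalPoly F (by lia), genericIntervalPoly, map_intervalPoly]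
    rfl
  rw [hgen, partialDerivMatrix_map]
  exact (isNonsingular_partialDerivMatrix_genericIntervalPoly hbal).map
    (IsFractionRing.injective (MvPolynomial (ℕ × ℕ × ℕ) F) (Gf F))

section RankUpperBound

variable {σ K : Type*} [DecidableEq σ] [Field K] {S U V : Finset σ}

lemma rank_partialDerivMatrix_mul_mul_two_pow_le (hUV : Disjoint U V) {P Q : MvPolynomial σ K}
    (hP : P ∈ supported K (U : Set σ)) (hQ : Q ∈ supported K (V : Set σ))
    (hbal : imbalance S (U ∪ V) = 0) :
    (partialDerivMatrix S (U ∪ V) (P * Q)).rank * 2 ^ (imbalance S U).natAbs ≤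
      2 ^ ((U ∪ V) ∩ S).card := by
  have hcard : ((U ∪ V) ∩ S).card = (U ∩ S).card + (V ∩ S).card := by
    rw [Finset.union_inter_distrib_right, Finset.card_union_of_disjoint
      (hUV.mono Finset.inter_subset_left Finset.inter_subset_left)]
  have hexp : (U \ S).card + (V ∩ S).card + (imbalance S U).natAbs ≤ ((U ∪ V) ∩ S).card ∨
      (U ∩ S).card + (V \ S).card + (imbalance S U).natAbs ≤ ((U ∪ V) ∩ S).card := by
    rw [imbalance_union hUV] at hbal
    simp only [imbalance] at hbal ⊢
    lia
  have hrank := le_min_iff.1 (rank_partialDerivMatrix_mul_le (S := S) hUV hP hQ)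
  obtain h | h := hexp
  · grw [hrank.1, ← pow_add, h]
    norm_num
  · grw [hrank.2, ← pow_add, h]
    norm_num

lemma rank_partialDerivMatrix_sum_mul_mul_two_pow_le {ι : Type*} [Fintype ι] (hUV : Disjoint U V)
    {P Q : ι → MvPolynomial σ K} (hP : ∀ a, P a ∈ supported K (U : Set σ))
    (hQ : ∀ a, Q a ∈ supported K (V : Set σ)) (hbal : imbalance S (U ∪ V) = 0) :
    (partialDerivMatrix S (U ∪ V) (∑ a, P a * Q a)).rank * 2 ^ (imbalance S U).natAbs ≤
      Fintype.card ι * 2 ^ ((U ∪ V) ∩ S).card := by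
  rw [map_sum]
  grw [rank_matrix_sum_le, Finset.sum_mul, Finset.sum_le_card_nsmul _ _ _ fun a _ =>
    rank_partialDerivMatrix_mul_mul_two_pow_le hUV (hP a) (hQ a) hbal]
  simp

end RankUpperBound

section ROABP

lemma image_Ioc_of_bijOn {N : ℕ} {π : ℕ → ℕ} (hπ : Set.BijOn π (Set.Icc 1 N) (Set.Icc 1 N)) :
    (Finset.Ioc 0 N).image π = Finset.Icc 1 N := by
  rw [← Finset.Icc_add_one_left_eq_Ioc, zero_add]
  exact Finset.coe_injective (by simpa using hπ.image_eq)

lemma disjoint_image_Ioc_of_injOn {α : Type*} [DecidableEq α] {N : ℕ} {π : ℕ → α}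
    (hπ : Set.InjOn π (Set.Icc 1 N)) (a : ℕ) {b c d : ℕ} (hbc : b ≤ c) (hb : b ≤ N) (hd : d ≤ N) :
    Disjoint ((Finset.Ioc a b).image π) ((Finset.Ioc c d).image π) := by
  rw [Finset.disjoint_iff_inter_eq_empty, ← Finset.image_inter_of_injOn,
    Finset.disjoint_iff_inter_eq_empty.1 (Finset.Ioc_disjoint_Ioc_of_le hbc), Finset.image_empty]
  refine hπ.mono fun x hx => ?_
  simp only [Finset.coe_Ioc, Set.mem_union, Set.mem_Ioc] at hx
  exact Set.mem_Icc.2 (by lia)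

lemma exists_mprodVal_eq_sum_mul {K : Type*} [CommSemiring K] {N w : ℕ} {π : ℕ → ℕ} (hw : 0 < w)
    {M : Fin N → Matrix (Fin w) (Fin w) (MvPolynomial ℕ K)} (hM : IsROABP N w π M) (p : ℕ) :
    ∃ P Q : Fin w → MvPolynomial ℕ K,
      (∀ a, P a ∈ supported K (((Finset.Ioc 0 p).image π : Finset ℕ) : Set ℕ)) ∧
      (∀ a, Q a ∈ supported K (((Finset.Ioc p N).image π : Finset ℕ) : Set ℕ)) ∧
      mprodVal hw M = ∑ a, P a * Q a := by
  have hlayer {ℓ : Fin N} {U : Finset ℕ} (hℓ : ℓ.val + 1 ∈ U) :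
      M ℓ ∈ (supported K ((U.image π : Finset ℕ) : Set ℕ)).toSubsemiring.matrix := by
    intro a b
    obtain ⟨c, d, h⟩ := hM.2 ℓ a b
    change M ℓ a b ∈ supported K _
    rw [h]
    exact add_mem (Subalgebra.algebraMap_mem _ _) <| mul_mem (Subalgebra.algebraMap_mem _ _) <|
      Algebra.subset_adjoin ⟨_, Finset.mem_image_of_mem π hℓ, rfl⟩
  refine ⟨fun a => ((List.ofFn M).take p).prod ⟨0, hw⟩ a,
    fun a => ((List.ofFn M).drop p).prod a ⟨0, hw⟩, fun a => ?_, fun a => ?_, ?_⟩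
  · refine list_prod_mem (S := (supported K _).toSubsemiring.matrix) (fun A hA => ?_) _ _
    obtain ⟨ℓ, hℓ, rfl⟩ := List.mem_iff_getElem.1 hA
    rw [List.length_take, List.length_ofFn] at hℓ
    rw [List.getElem_take, List.getElem_ofFn]
    exact hlayer (Finset.mem_Ioc.2 (by lia))
  · refine list_prod_mem (S := (supported K _).toSubsemiring.matrix) (fun A hA => ?_) _ _
    obtain ⟨ℓ, hℓ, rfl⟩ := List.mem_iff_getElem.1 hA
    rw [List.length_drop, List.length_ofFn] at hℓ
    rw [List.getElem_drop, List.getElem_ofFn]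
    exact hlayer (Finset.mem_Ioc.2 (by lia))
  · rw [mprodVal, ← Matrix.mul_apply, ← List.prod_append, List.take_append_drop]

lemma rank_partialDerivMatrix_mprodVal_mul_two_pow_le {K : Type*} [Field K] {N w p : ℕ}
    {π : ℕ → ℕ} (hw : 0 < w) {M : Fin N → Matrix (Fin w) (Fin w) (MvPolynomial ℕ K)}
    (hM : IsROABP N w π M) (hp : p ≤ N) {S : Finset ℕ} (hbal : imbalance S (Finset.Icc 1 N) = 0) :
    (partialDerivMatrix S (Finset.Icc 1 N) (mprodVal hw M)).rank *
        2 ^ (imbalance S ((Finset.Ioc 0 p).image π)).natAbs ≤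
      w * 2 ^ (Finset.Icc 1 N ∩ S).card := by
  obtain ⟨P, Q, hP, hQ, hPQ⟩ := exists_mprodVal_eq_sum_mul hw hM p
  have hunion : (Finset.Ioc 0 p).image π ∪ (Finset.Ioc p N).image π = Finset.Icc 1 N := by
    rw [← Finset.image_union, Finset.Ioc_union_Ioc_eq_Ioc p.zero_le hp, image_Ioc_of_bijOn hM.1]
  have hdisj := disjoint_image_Ioc_of_injOn hM.1.injOn 0 le_rfl hp le_rfl
  rw [hPQ, ← hunion]
  have := rank_partialDerivMatrix_sum_mul_mul_two_pow_le hdisj hP hQ (hunion ▸ hbal)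
  rwa [Fintype.card_fin] at this

lemma two_pow_le_sum_width {F : Type*} [Field F] {N m q : ℕ} {sw : Fin m → ℕ}
    (hsw : ∀ i, 0 < sw i) {π : Fin m → ℕ → ℕ}
    {M : (i : Fin m) → Fin N → Matrix (Fin (sw i)) (Fin (sw i)) (MvPolynomial ℕ (Gf F))}
    (hM : ∀ i, IsROABP N (sw i) (π i) (M i))
    (hraz : razPoly F N = ∑ i, mprodVal (hsw i) (M i)) {S : Finset ℕ}
    (hbal : imbalance S (Finset.Icc 1 N) = 0)
    (hunb : ∀ i, ∃ p ≤ N, q ≤ (imbalance S ((Finset.Ioc 0 p).image (π i))).natAbs) :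
    2 ^ q ≤ ∑ i, sw i := by
  have hrank := (isNonsingular_partialDerivMatrix_razPoly F hbal).rank_eq_card
  rw [Fintype.card_coe, Finset.card_powerset] at hrank
  refine Nat.le_of_mul_le_mul_left (?_ : 2 ^ (Finset.Icc 1 N ∩ S).card * 2 ^ q ≤
    2 ^ (Finset.Icc 1 N ∩ S).card * ∑ i, sw i) (by positivity)
  calc 2 ^ (Finset.Icc 1 N ∩ S).card * 2 ^ q
      = (∑ i, partialDerivMatrix S (Finset.Icc 1 N) (mprodVal (hsw i) (M i))).rank * 2 ^ q := by
        rw [← hrank, hraz, map_sum]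
    _ ≤ ∑ i, (partialDerivMatrix S (Finset.Icc 1 N) (mprodVal (hsw i) (M i))).rank * 2 ^ q := by
        grw [rank_matrix_sum_le, Finset.sum_mul]
    _ ≤ ∑ i, sw i * 2 ^ (Finset.Icc 1 N ∩ S).card := by
        refine Finset.sum_le_sum fun i _ => ?_
        obtain ⟨p, hp, hq⟩ := hunb i
        grw [hq]
        · exact rank_partialDerivMatrix_mprodVal_mul_two_pow_le (hsw i) (hM i) hp hbal
        · norm_num
    _ = 2 ^ (Finset.Icc 1 N ∩ S).card * ∑ i, sw i := by rw [← Finset.sum_mul, mul_comm]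

end ROABP

section Counting

variable {σ ι : Type*} [DecidableEq σ]

lemma centralBinom_sq_mul_two_mul_add_one_le (n : ℕ) :
    n.centralBinom ^ 2 * (2 * n + 1) ≤ 16 ^ n := by
  induction n with
  | zero => simp
  | succ n ih =>
    have hrec := n.succ_mul_centralBinom_succ
    refine Nat.le_of_mul_le_mul_left (?_ : (n + 1) ^ 2 * _ ≤ (n + 1) ^ 2 * _) (by positivity)
    calc (n + 1) ^ 2 * ((n + 1).centralBinom ^ 2 * (2 * (n + 1) + 1))
        = ((n + 1) * (n + 1).centralBinom) ^ 2 * (2 * n + 3) := by ring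
      _ = (n.centralBinom ^ 2 * (2 * n + 1)) * (4 * (2 * n + 1) * (2 * n + 3)) := by
        rw [hrec]
        ring
      _ ≤ 16 ^ n * (16 * (n + 1) ^ 2) := Nat.mul_le_mul ih (by lia)
      _ = (n + 1) ^ 2 * 16 ^ (n + 1) := by ring

lemma imbalance_inter_self (S U : Finset σ) : imbalance (S ∩ U) U = imbalance S U := by
  rw [imbalance, imbalance, ← Finset.inter_assoc, Finset.inter_right_comm, Finset.inter_self,
    Finset.sdiff_inter_self_right]

lemma imbalance_of_subset {S U : Finset σ} (hSU : S ⊆ U) :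
    imbalance S U = 2 * S.card - U.card := by
  rw [imbalance, Finset.inter_eq_right.2 hSU, ← Finset.card_sdiff_add_card_eq_card hSU]
  push_cast
  ring

lemma card_filter_imbalance_le (q : ℕ) {n : ℕ} {B : Finset σ} (hB : B.card = 2 * n) :
    (B.powerset.filter fun T => (imbalance T B).natAbs ≤ 2 * q).card ≤
      (2 * q + 1) * n.centralBinom := by
  have hsub : (B.powerset.filter fun T => (imbalance T B).natAbs ≤ 2 * q) ⊆
      (Finset.Icc (n - q) (n + q)).biUnion fun k => B.powersetCard k := by
    intro T hT
    obtain ⟨hTB, hq⟩ := Finset.mem_filter.1 hT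
    rw [Finset.mem_powerset] at hTB
    rw [imbalance_of_subset hTB, hB] at hq
    exact Finset.mem_biUnion.2
      ⟨T.card, Finset.mem_Icc.2 (by lia), Finset.mem_powersetCard.2 ⟨hTB, rfl⟩⟩
  calc _ ≤ (Finset.Icc (n - q) (n + q)).card * n.centralBinom := by
        refine (Finset.card_le_card hsub).trans
          (Finset.card_biUnion_le_card_mul _ _ _ fun k _ => ?_)
        rw [Finset.card_powersetCard, hB]
        exact Nat.choose_le_centralBinom k n
    _ ≤ (2 * q + 1) * n.centralBinom := by
        gcongr
        rw [Nat.card_Icc]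
        lia

lemma card_filter_imbalance_mul_two_le {q n : ℕ} {B : Finset σ} (hB : B.card = 2 * n)
    (hqn : 4 * (2 * q + 1) ^ 2 ≤ 2 * n + 1) :
    (B.powerset.filter fun T => (imbalance T B).natAbs ≤ 2 * q).card * 2 ≤ 2 ^ B.card := by
  grw [card_filter_imbalance_le q hB, hB]
  refine (Nat.pow_le_pow_iff_left two_ne_zero).1 ?_
  calc ((2 * q + 1) * n.centralBinom * 2) ^ 2
      = n.centralBinom ^ 2 * (4 * (2 * q + 1) ^ 2) := by ring
    _ ≤ n.centralBinom ^ 2 * (2 * n + 1) := by gcongr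
    _ ≤ 16 ^ n := centralBinom_sq_mul_two_mul_add_one_le n
    _ = (2 ^ (2 * n)) ^ 2 := by rw [← pow_mul, show 2 * n * 2 = 4 * n by ring, pow_mul]; norm_num

lemma card_filter_inter_and_sdiff_le (p q : Finset σ → Prop) [DecidablePred p] [DecidablePred q]
    (X B : Finset σ) :
    (X.powerset.filter fun S => p (S ∩ B) ∧ q (S \ B)).card ≤
      (B.powerset.filter p).card * ((X \ B).powerset.filter q).card := by
  rw [← Finset.card_product]
  refine Finset.card_le_card_of_injOn (fun S => (S ∩ B, S \ B)) (fun S hS => ?_)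
    fun S _ T _ hST => ?_
  · obtain ⟨hSX, hp, hq⟩ := Finset.mem_filter.1 hS
    rw [Finset.mem_powerset] at hSX
    exact Finset.mem_product.2 ⟨Finset.mem_filter.2
        ⟨Finset.mem_powerset.2 Finset.inter_subset_right, hp⟩, Finset.mem_filter.2
        ⟨Finset.mem_powerset.2 (Finset.sdiff_subset_sdiff hSX le_rfl), hq⟩⟩
  · obtain ⟨hinter, hsdiff⟩ := Prod.ext_iff.1 hST
    change S ∩ B = T ∩ B at hinter
    change S \ B = T \ B at hsdiff
    rw [← Finset.sdiff_union_inter S B, hinter, hsdiff, Finset.sdiff_union_inter]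

lemma card_filter_forall_inter_mul_two_pow_le (p : ι → Finset σ → Prop) [∀ i, DecidablePred (p i)]
    {s : Finset ι} {X : Finset σ} {B : ι → Finset σ} (hBX : ∀ i ∈ s, B i ⊆ X)
    (hB : (s : Set ι).PairwiseDisjoint B)
    (hp : ∀ i ∈ s, ((B i).powerset.filter (p i)).card * 2 ≤ 2 ^ (B i).card) :
    (X.powerset.filter fun S => ∀ i ∈ s, p i (S ∩ B i)).card * 2 ^ s.card ≤ 2 ^ X.card := by
  classical
  induction s using Finset.induction_on generalizing X with
  | empty => simp
  | insert a s ha ih =>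
    rw [Finset.coe_insert, Set.pairwiseDisjoint_insert_of_notMem (by simpa using ha)] at hB
    rw [Finset.forall_mem_insert] at hBX hp
    have hsdiff (S : Finset σ) {i : ι} (hi : i ∈ s) : S ∩ B i = S \ B a ∩ B i := by
      rw [Finset.inter_comm (S \ B a), ← Finset.inter_sdiff_assoc, Finset.sdiff_eq_self_of_disjoint
        ((hB.2 i hi).symm.mono_left Finset.inter_subset_left), Finset.inter_comm]
    have hsplit (S : Finset σ) : (∀ i ∈ insert a s, p i (S ∩ B i)) ↔
        p a (S ∩ B a) ∧ ∀ i ∈ s, p i (S \ B a ∩ B i) := by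
      rw [Finset.forall_mem_insert]
      exact and_congr_right fun _ => forall₂_congr fun i hi => by rw [hsdiff S hi]
    have hrest := ih (X := X \ B a)
      (fun i hi => Finset.subset_sdiff.2 ⟨hBX.2 i hi, (hB.2 i hi).symm⟩) hB.1 hp.2
    simp only [hsplit]
    grw [card_filter_inter_and_sdiff_le (p a) fun T => ∀ i ∈ s, p i (T ∩ B i),
      Finset.card_insert_of_notMem ha]
    calc _ = (((B a).powerset.filter (p a)).card * 2) *
          (((X \ B a).powerset.filter fun S => ∀ i ∈ s, p i (S ∩ B i)).card * 2 ^ s.card) := by ring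
      _ ≤ 2 ^ (B a).card * 2 ^ (X \ B a).card := Nat.mul_le_mul hp.1 hrest
      _ = 2 ^ X.card := by rw [← pow_add, add_comm, Finset.card_sdiff_add_card_eq_card hBX.1]

lemma exists_balanced_forall_exists_lt_natAbs_imbalance [Fintype ι] {X : Finset σ} {h n q t : ℕ}
    {B : ι → Fin t → Finset σ} (hh : 0 < h) (hX : X.card = 2 * h)
    (hBX : ∀ i j, B i j ⊆ X) (hB : ∀ i, Pairwise fun j k => Disjoint (B i j) (B i k))
    (hcard : ∀ i j, (B i j).card = 2 * n) (hqn : 4 * (2 * q + 1) ^ 2 ≤ 2 * n + 1)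
    (ht : Fintype.card ι * (2 * h) < 2 ^ t) :
    ∃ S, imbalance S X = 0 ∧ ∀ i, ∃ j, 2 * q < (imbalance S (B i j)).natAbs := by
  let bad (i : ι) := X.powerset.filter fun S => ∀ j, (imbalance S (B i j)).natAbs ≤ 2 * q
  have hbad (i : ι) : (bad i).card * 2 ^ t ≤ 4 ^ h := by
    have := card_filter_forall_inter_mul_two_pow_le (s := Finset.univ)
      (fun j T => (imbalance T (B i j)).natAbs ≤ 2 * q) (fun j _ => hBX i j)
      ((hB i).set_pairwise _) fun j _ => card_filter_imbalance_mul_two_le (hcard i j) hqn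
    simpa [imbalance_inter_self, hX, pow_mul, bad] using this
  have hlt : (Finset.univ.biUnion bad).card < (X.powersetCard h).card := by
    rw [Finset.card_powersetCard, hX, ← Nat.centralBinom_eq_two_mul_choose]
    refine Nat.lt_of_mul_lt_mul_right (a := 2 ^ t) ?_
    calc (Finset.univ.biUnion bad).card * 2 ^ t ≤ ∑ i, (bad i).card * 2 ^ t := by
          grw [Finset.card_biUnion_le, Finset.sum_mul]
      _ ≤ Fintype.card ι * 4 ^ h := by
          grw [Finset.sum_le_card_nsmul _ _ _ fun i _ => hbad i]
          rfl
      _ ≤ Fintype.card ι * (2 * h * h.centralBinom) := by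
          grw [Nat.four_pow_le_two_mul_self_mul_centralBinom h hh]
      _ = h.centralBinom * (Fintype.card ι * (2 * h)) := by ring
      _ < h.centralBinom * 2 ^ t := Nat.mul_lt_mul_of_pos_left ht h.centralBinom_pos
  obtain ⟨S, hS, hSbad⟩ := Finset.exists_mem_notMem_of_card_lt_card hlt
  obtain ⟨hSX, hSh⟩ := Finset.mem_powersetCard.1 hS
  refine ⟨S, by rw [imbalance_of_subset hSX, hSh, hX]; push_cast; ring, fun i => ?_⟩
  by_contra! hi
  exact hSbad (Finset.mem_biUnion.2
    ⟨i, Finset.mem_univ i, Finset.mem_filter.2 ⟨Finset.mem_powerset.2 hSX, hi⟩⟩)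

end Counting

section LowerBound

lemma exists_prefix_lt_natAbs_imbalance {N q a b : ℕ} {π : ℕ → ℕ} {S : Finset ℕ}
    (hπ : Set.InjOn π (Set.Icc 1 N)) (hab : a ≤ b) (hb : b ≤ N)
    (hunb : 2 * q < (imbalance S ((Finset.Ioc a b).image π)).natAbs) :
    ∃ p ≤ N, q < (imbalance S ((Finset.Ioc 0 p).image π)).natAbs := by
  have hadd : imbalance S ((Finset.Ioc 0 b).image π) =
      imbalance S ((Finset.Ioc 0 a).image π) + imbalance S ((Finset.Ioc a b).image π) := by
    rw [← imbalance_union (disjoint_image_Ioc_of_injOn hπ 0 le_rfl (hab.trans hb) hb),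
      ← Finset.image_union, Finset.Ioc_union_Ioc_eq_Ioc a.zero_le hab]
  by_cases ha : q < (imbalance S ((Finset.Ioc 0 a).image π)).natAbs
  · exact ⟨a, hab.trans hb, ha⟩
  · exact ⟨b, hb, by lia⟩

lemma exists_balanced_forall_exists_prefix_lt_natAbs_imbalance {N m q : ℕ} (hN : Even N)
    (hqN : 4 * (2 * q + 1) ^ 3 ≤ N) (hm : m * N < 2 ^ (2 * q + 1)) {π : Fin m → ℕ → ℕ}
    (hπ : ∀ i, Set.BijOn (π i) (Set.Icc 1 N) (Set.Icc 1 N)) :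
    ∃ S, imbalance S (Finset.Icc 1 N) = 0 ∧
      ∀ i, ∃ p ≤ N, q < (imbalance S ((Finset.Ioc 0 p).image (π i))).natAbs := by
  obtain ⟨h, rfl⟩ := even_iff_two_dvd.1 hN
  set L := 2 * (2 * (2 * q + 1) ^ 2)
  let block (i : Fin m) (j : Fin (2 * q + 1)) := (Finset.Ioc (j * L) ((j + 1) * L)).image (π i)
  have hpos : 0 < 2 * h := lt_of_lt_of_le (by positivity) hqN
  have hstart (j : ℕ) : j * L ≤ (j + 1) * L := by gcongr; lia
  have hend (j : Fin (2 * q + 1)) : (j + 1) * L ≤ 2 * h :=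
    calc (j + 1) * L ≤ (2 * q + 1) * L := by gcongr; lia
      _ = 4 * (2 * q + 1) ^ 3 := by ring
      _ ≤ 2 * h := hqN
  have hsub (i : Fin m) (j : Fin (2 * q + 1)) : block i j ⊆ Finset.Icc 1 (2 * h) := by
    rw [← image_Ioc_of_bijOn (hπ i)]
    exact Finset.image_subset_image (Finset.Ioc_subset_Ioc (Nat.zero_le _) (hend j))
  have hdisj (i : Fin m) : Pairwise fun j k => Disjoint (block i j) (block i k) := by
    refine (pairwise_disjoint_on (block i)).2 fun j k hjk => ?_
    exact disjoint_image_Ioc_of_injOn (hπ i).injOn _ (by gcongr; lia) (hend j) (hend k)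
  have hcard (i : Fin m) (j : Fin (2 * q + 1)) : (block i j).card = L := by
    rw [Finset.card_image_of_injOn ((hπ i).injOn.mono fun x hx => ?_), Nat.card_Ioc]
    · rw [add_mul, one_mul, Nat.add_sub_cancel_left]
    · obtain ⟨hlt, hle⟩ := Finset.mem_Ioc.1 hx
      exact Set.mem_Icc.2 ⟨(Nat.zero_le _).trans_lt hlt, hle.trans (hend j)⟩
  obtain ⟨S, hbal, hunb⟩ := exists_balanced_forall_exists_lt_natAbs_imbalance (h := h) (q := q)
    (n := 2 * (2 * q + 1) ^ 2) (pos_of_mul_pos_right hpos two_pos.le) (by simp) hsub hdisj hcard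
    (by lia) (by simpa using hm)
  refine ⟨S, hbal, fun i => ?_⟩
  obtain ⟨j, hj⟩ := hunb i
  exact exists_prefix_lt_natAbs_imbalance (hπ i).injOn (hstart j) (hend j) hj

lemma two_pow_succ_le_sum_width {F : Type*} [Field F] {N m q : ℕ} (hN : Even N)
    (hqN : 4 * (2 * q + 1) ^ 3 ≤ N) (hNq : N ≤ 2 ^ q) {sw : Fin m → ℕ} (hsw : ∀ i, 0 < sw i)
    {π : Fin m → ℕ → ℕ}
    {M : (i : Fin m) → Fin N → Matrix (Fin (sw i)) (Fin (sw i)) (MvPolynomial ℕ (Gf F))}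
    (hM : ∀ i, IsROABP N (sw i) (π i) (M i))
    (hraz : razPoly F N = ∑ i, mprodVal (hsw i) (M i)) :
    2 ^ (q + 1) ≤ ∑ i, sw i := by
  by_contra! hlt
  have hm : m ≤ ∑ i, sw i := by
    simpa using Finset.card_nsmul_le_sum Finset.univ sw 1 fun i _ => hsw i
  have hmN : m * N < 2 ^ (2 * q + 1) :=
    calc m * N ≤ m * 2 ^ q := by gcongr
      _ < 2 ^ (q + 1) * 2 ^ q := by gcongr; lia
      _ = 2 ^ (2 * q + 1) := by rw [← pow_add]; congr 1; lia
  obtain ⟨S, hbal, hunb⟩ :=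
    exists_balanced_forall_exists_prefix_lt_natAbs_imbalance hN hqN hmN fun i => (hM i).1
  exact hlt.not_ge (two_pow_le_sum_width hsw hM hraz hbal hunb)

lemma sixty_four_mul_succ_cube_le_two_pow {q : ℕ} (hq : 19 ≤ q) : 64 * (q + 1) ^ 3 ≤ 2 ^ q := by
  induction q, hq using Nat.le_induction with
  | base => norm_num
  | succ q hq ih =>
    have hcube : 19 * 19 * q ≤ q * q * q := by gcongr
    calc 64 * (q + 1 + 1) ^ 3 ≤ 64 * (q + 1) ^ 3 * 2 := by linarith
      _ ≤ 2 ^ q * 2 := by gcongr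
      _ = 2 ^ (q + 1) := (pow_succ 2 q).symm

lemma exists_cube_parameter {N : ℕ} (hN : 76 ^ 3 ≤ N) :
    ∃ q : ℕ, 4 * (2 * q + 1) ^ 3 ≤ N ∧ N ≤ 2 ^ q ∧ (N : ℝ) ^ (1 / 3 : ℝ) / 4 ≤ q + 1 := by
  set r : ℝ := (N : ℝ) ^ (1 / 3 : ℝ) with hr
  have hrN : r ^ 3 = N := by
    rw [hr, ← Real.rpow_natCast, ← Real.rpow_mul N.cast_nonneg]
    norm_num
  have hr76 : 76 ≤ r := by
    refine le_of_pow_le_pow_left₀ three_ne_zero (by positivity) ?_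
    rw [hrN]
    exact_mod_cast hN
  have hle : (⌊r / 4⌋₊ : ℝ) ≤ r / 4 := Nat.floor_le (by positivity)
  have hlt : r / 4 < ⌊r / 4⌋₊ + 1 := Nat.lt_floor_add_one _
  have hq : 19 ≤ ⌊r / 4⌋₊ := Nat.le_floor (by norm_num; linarith)
  refine ⟨⌊r / 4⌋₊, ?_, ?_, hlt.le⟩
  · have : (4 * (2 * ⌊r / 4⌋₊ + 1) ^ 3 : ℝ) ≤ N :=
      calc (4 * (2 * ⌊r / 4⌋₊ + 1) ^ 3 : ℝ) ≤ 4 * (r / 2 + 1) ^ 3 := by gcongr; linarith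
        _ ≤ r ^ 3 := by nlinarith [sq_nonneg r]
        _ = N := hrN
    exact_mod_cast this
  · have : (N : ℝ) ≤ 64 * (⌊r / 4⌋₊ + 1) ^ 3 :=
      calc (N : ℝ) = 64 * (r / 4) ^ 3 := by rw [← hrN]; ring
        _ ≤ 64 * (⌊r / 4⌋₊ + 1) ^ 3 := by gcongr
    exact le_trans (by exact_mod_cast this) (sixty_four_mul_succ_cube_le_two_pow hq)

theorem sum_of_roabp_lower_bound_general {F : Type*} [Field F] {N m : ℕ} (hN : 76 ^ 3 ≤ N)
    (heven : Even N) {sw : Fin m → ℕ} (hsw : ∀ i, 0 < sw i) {π : Fin m → ℕ → ℕ}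
    {M : (i : Fin m) → Fin N → Matrix (Fin (sw i)) (Fin (sw i)) (MvPolynomial ℕ (Gf F))}
    (hM : ∀ i, IsROABP N (sw i) (π i) (M i))
    (hraz : razPoly F N = ∑ i, mprodVal (hsw i) (M i)) :
    (2 : ℝ) ^ ((N : ℝ) ^ (1 / 3 : ℝ) / 4) ≤ (∑ i, sw i : ℕ) := by
  obtain ⟨q, hqN, hNq, hq⟩ := exists_cube_parameter hN
  calc (2 : ℝ) ^ ((N : ℝ) ^ (1 / 3 : ℝ) / 4) ≤ 2 ^ ((q + 1 : ℕ) : ℝ) := by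
        gcongr
        · norm_num
        · exact_mod_cast hq
    _ = (2 ^ (q + 1) : ℕ) := by rw [Real.rpow_natCast]; norm_cast
    _ ≤ (∑ i, sw i : ℕ) := by
        exact_mod_cast two_pow_succ_le_sum_width heven hqN hNq hsw hM hraz

lemma div_rpow_logb_sup_le {N m : ℕ} (hN : 2 ≤ N) {sw : Fin m → ℕ} {a : ℝ} (ha : 0 < a)
    (hsum : a ≤ (∑ i, sw i : ℕ)) :
    a / ((Finset.univ.sup sw : ℕ) : ℝ) ^ Real.logb 2 N ≤ m := by
  set s := Finset.univ.sup sw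
  have hms : a ≤ m * s := by
    refine hsum.trans ?_
    have := Finset.sum_le_card_nsmul Finset.univ sw s fun i hi => Finset.le_sup hi
    rw [Finset.card_univ, Fintype.card_fin, smul_eq_mul] at this
    exact_mod_cast this
  have hs : 1 ≤ (s : ℝ) := by
    refine Nat.one_le_cast.2 (Nat.one_le_iff_ne_zero.2 fun hs => ?_)
    rw [hs, Nat.cast_zero, mul_zero] at hms
    exact hms.not_gt ha
  have hlog : 1 ≤ Real.logb 2 N := by
    rw [Real.le_logb_iff_rpow_le one_lt_two (by positivity), Real.rpow_one]
    exact_mod_cast hN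
  rw [div_le_iff₀ (by positivity)]
  exact hms.trans (by gcongr; exact Real.self_le_rpow_of_one_le hs hlog)

lemma two_rpow_div_rpow_logb_sup_le {N m : ℕ} (hN : 2 ≤ N) {sw : Fin m → ℕ}
    (hsum : (2 : ℝ) ^ ((N : ℝ) ^ (1 / 3 : ℝ) / 4) ≤ (∑ i, sw i : ℕ)) :
    (2 : ℝ) ^ (1 / 4 * (N : ℝ) ^ (1 / 5 : ℝ)) /
      ((Finset.univ.sup sw : ℕ) : ℝ) ^ (1 * Real.logb 2 N) ≤ m := by
  have hroot : (N : ℝ) ^ (1 / 5 : ℝ) ≤ (N : ℝ) ^ (1 / 3 : ℝ) :=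
    Real.rpow_le_rpow_of_exponent_le (by exact_mod_cast one_le_two.trans hN) (by norm_num)
  rw [one_mul]
  exact div_rpow_logb_sup_le hN (by positivity) <|
    (Real.rpow_le_rpow_of_exponent_le one_le_two (by linarith)).trans hsum

end LowerBound

/-- Theorem (sum of ROABPs lower bound): any representation of the Raz–Yehudayoff
polynomial `g` as a sum of `m` ROABPs of widths `s_i ≥ 2` satisfies
`m ≥ 2^{c₁ N^{1/5}} / s^{c₂ log N}` where `s = max_i s_i`. -/
theorem sum_of_roabp_lower_bound :
    ∃ c₁ c₂ : ℝ, 0 < c₁ ∧ 0 < c₂ ∧ ∃ N₀ : ℕ, ∀ (F : Type) [Field F] (N : ℕ),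
      N₀ ≤ N → Even N →
      ∀ (m : ℕ) (sw : Fin m → ℕ) (hsw : ∀ i, 2 ≤ sw i)
        (π : Fin m → ℕ → ℕ)
        (M : (i : Fin m) → Fin N → Matrix (Fin (sw i)) (Fin (sw i)) (MvPolynomial ℕ (Gf F))),
        (∀ i, IsROABP N (sw i) (π i) (M i)) →
        razPoly F N = ∑ i : Fin m, mprodVal (show 0 < sw i by have := hsw i; omega) (M i) →
        (2 : ℝ) ^ (c₁ * (N : ℝ) ^ ((1 : ℝ) / 5)) /
            ((Finset.univ.sup sw : ℕ) : ℝ) ^ (c₂ * Real.logb 2 N) ≤ (m : ℝ) := by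
  refine ⟨1 / 4, 1, by norm_num, one_pos, 76 ^ 3, fun F _ N hN heven m sw hsw π M hM hraz => ?_⟩
  exact two_rpow_div_rpow_logb_sup_le (le_trans (by norm_num) hN)
    (sum_of_roabp_lower_bound_general hN heven (fun i => two_pos.trans_le (hsw i)) hM hraz)

end
end

section
/- There is a constant C > 0 such that for all positive integers S, M_1, M_2 with √S ≤ M_1 ≤ S/2 and S/4 ≤ M_2 ≤ 3S/4 the following holds: if A ⊆ [S] is a fixed set with |A| = M_1 and T is a uniformly random subset of [S] of size M_2, then for every integer a, Pr[|T ∩ A| = a] ≤ C·S^{−1/4}. Equivalently, binom(M_1, a)·binom(S − M_1, M_2 − a) / binom(S, M_2) ≤ C·S^{−1/4} for every integer a. -/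
open MvPolynomial

noncomputable section

/-!
Sort the elements by membership in `A` and in `T` into a `2 × 2` table with cells `a, x` in the
row of `A` and `y, w` in the row of `Aᶜ`, the columns being `T` and `Tᶜ`; let `N` be the total.
The number of sets `T` with these cells is `choose (a + x) a * choose (y + w) y`, and passing to
the table with cells `a + 1, x - 1, y - 1, w + 1` divides it by `(a + 1) * (w + 1) / (x * y)`.
Such a step increases the determinant `a * w - x * y` by exactly `N`. So if the determinant starts
out nonpositive, which means that `a` is at most the mean, and `s` is at most half the standard
deviation `σ`, then each of the next `s` steps divides the number by at most `1 + 1 / s`. The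
`s + 1` numbers met on the way are therefore all at least `1 / e` times the first one, and by
Vandermonde's identity they add up to at most the number of all sets `T`; hence every point
probability is `O(1 / σ)`. Above the mean, replace `T` by its complement.
-/

theorem choose_mul_choose_succ_mul (K m a b : ℕ) :
    K.choose a * m.choose (b + 1) * ((K - a) * (b + 1)) =
      K.choose (a + 1) * m.choose b * ((a + 1) * (m - b)) := by
  linear_combination (m.choose (b + 1) * (b + 1)) * (Nat.choose_succ_right_eq K a).symm +
    (K.choose (a + 1) * (a + 1)) * Nat.choose_succ_right_eq m b

theorem mul_choose_mul_choose_succ_le {K m a b p q : ℕ} (ha : a < K)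
    (h : p * ((a + 1) * (m - b)) ≤ q * ((K - a) * (b + 1))) :
    p * (K.choose a * m.choose (b + 1)) ≤ q * (K.choose (a + 1) * m.choose b) := by
  have hpos : 0 < (K - a) * (b + 1) := Nat.mul_pos (Nat.sub_pos_of_lt ha) b.succ_pos
  refine Nat.le_of_mul_le_mul_right ?_ hpos
  calc p * (K.choose a * m.choose (b + 1)) * ((K - a) * (b + 1))
      = K.choose (a + 1) * m.choose b * (p * ((a + 1) * (m - b))) := by
        rw [mul_assoc, choose_mul_choose_succ_mul, mul_left_comm]
    _ ≤ K.choose (a + 1) * m.choose b * (q * ((K - a) * (b + 1))) := Nat.mul_le_mul_left _ h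
    _ = q * (K.choose (a + 1) * m.choose b) * ((K - a) * (b + 1)) := by ring

theorem succ_mul_le_exp_one_mul_sum {u : ℕ → ℝ} {s : ℕ} (hu : 0 ≤ u 0)
    (h : ∀ j < s, s * u j ≤ (s + 1) * u (j + 1)) :
    (s + 1) * u 0 ≤ Real.exp 1 * ∑ j ∈ Finset.range (s + 1), u j := by
  set r : ℝ := 1 + (s : ℝ)⁻¹
  have one_le_r : 1 ≤ r := le_add_of_nonneg_right (by positivity)
  have r_pos : 0 < r := one_pos.trans_le one_le_r
  have step : ∀ j < s, r⁻¹ * u j ≤ u (j + 1) := by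
    intro j hj
    have hs : (0 : ℝ) < s := by exact_mod_cast j.zero_le.trans_lt hj
    rw [inv_mul_le_iff₀ r_pos]
    refine le_of_mul_le_mul_left ((h j hj).trans_eq ?_) hs
    simp only [r]
    field_simp
  have u_zero_le : ∀ j ∈ Finset.range (s + 1), u 0 ≤ Real.exp 1 * u j := by
    intro j hj
    have hjs : j ≤ s := Finset.mem_range_succ_iff.mp hj
    have geom : r⁻¹ ^ j * u 0 ≤ u j :=
      geom_le (inv_nonneg.mpr r_pos.le) j fun k hk => step k (hk.trans_le hjs)
    rw [inv_pow, inv_mul_le_iff₀ (pow_pos r_pos j)] at geom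
    have r_pow_le : r ^ j ≤ Real.exp 1 :=
      (pow_le_pow_right₀ one_le_r hjs).trans Real.one_add_inv_pow_le_exp
    have hj_nonneg : 0 ≤ u j := nonneg_of_mul_nonneg_right (hu.trans geom) (pow_pos r_pos j)
    exact geom.trans (mul_le_mul_of_nonneg_right r_pow_le hj_nonneg)
  calc (s + 1) * u 0 = (Finset.range (s + 1)).card • u 0 := by simp
    _ ≤ ∑ j ∈ Finset.range (s + 1), Real.exp 1 * u j := Finset.card_nsmul_le_sum _ _ _ u_zero_le
    _ = Real.exp 1 * ∑ j ∈ Finset.range (s + 1), u j := (Finset.mul_sum ..).symm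

theorem sum_range_choose_mul_choose_le (K m a : ℕ) {b s : ℕ} (hs : s ≤ b) :
    ∑ j ∈ Finset.range (s + 1), K.choose (a + j) * m.choose (b - j) ≤ (K + m).choose (a + b) := by
  rw [Nat.add_choose_eq, Finset.Nat.sum_antidiagonal_eq_sum_range_succ_mk]
  calc ∑ j ∈ Finset.range (s + 1), K.choose (a + j) * m.choose (b - j)
      = ∑ i ∈ Finset.Ico a (a + (s + 1)), K.choose i * m.choose (a + b - i) := by
        simp only [Finset.sum_Ico_eq_sum_range, Nat.add_sub_cancel_left, Nat.add_sub_add_left]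
    _ ≤ ∑ i ∈ Finset.range (a + b).succ, K.choose i * m.choose (a + b - i) := by
        refine Finset.sum_le_sum_of_subset fun i hi => ?_
        rw [Finset.mem_Ico] at hi
        rw [Finset.mem_range]
        lia

section Table

variable {a x y w s : ℕ}

theorem two_mul_le_of_four_mul_sq_mul_le {N : ℕ} (hN : 0 < N) (hy : y ≤ N)
    (hs : 4 * s ^ 2 * N ≤ x * y) : 2 * s ≤ x := by
  have hx : 4 * s ^ 2 ≤ x :=
    Nat.le_of_mul_le_mul_right (hs.trans (Nat.mul_le_mul_left x hy)) hN
  nlinarith [Nat.le_self_pow two_ne_zero s]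

theorem sq_mul_le_sub_mul_sub {j N : ℕ} (hj : j ≤ s) (hx : 2 * s ≤ x) (hy : 2 * s ≤ y)
    (hs : 4 * s ^ 2 * N ≤ x * y) : s ^ 2 * N ≤ (x - j) * (y - j) := by
  have hprod : x * y ≤ 2 * (x - j) * (2 * (y - j)) := Nat.mul_le_mul (by lia) (by lia)
  linarith

theorem succ_mul_succ_le_sub_mul_sub_add {j : ℕ} (hdet : a * w ≤ x * y) (hj : j < s)
    (hx : s ≤ x) (hy : s ≤ y) :
    (a + j + 1) * (w + j + 1) ≤ (x - j) * (y - j) + s * (a + x + y + w) := by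
  obtain ⟨x', rfl⟩ := Nat.exists_eq_add_of_le (hj.le.trans hx)
  obtain ⟨y', rfl⟩ := Nat.exists_eq_add_of_le (hj.le.trans hy)
  rw [Nat.add_sub_cancel_left, Nat.add_sub_cancel_left]
  have hmul := Nat.mul_le_mul_right (a + (j + x') + (j + y') + w) (Nat.succ_le_of_lt hj)
  have hpos : 0 < x' := by lia
  rw [Nat.succ_eq_add_one] at hmul
  linarith

theorem mul_choose_mul_choose_add_le_of_det_nonpos (hdet : a * w ≤ x * y) (hN : 0 < a + x + y + w)
    (hs : 4 * s ^ 2 * (a + x + y + w) ≤ x * y) {j : ℕ} (hj : j < s) :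
    s * ((a + x).choose (a + j) * (y + w).choose (y - j)) ≤
      (s + 1) * ((a + x).choose (a + (j + 1)) * (y + w).choose (y - (j + 1))) := by
  have hx : 2 * s ≤ x := two_mul_le_of_four_mul_sq_mul_le hN (by lia) hs
  have hy : 2 * s ≤ y := two_mul_le_of_four_mul_sq_mul_le hN (y := x) (by lia) (by rwa [mul_comm y])
  have hlarge := sq_mul_le_sub_mul_sub hj.le hx hy hs
  have hclose := succ_mul_succ_le_sub_mul_sub_add hdet hj (by lia) (by lia)
  have hratio : s * ((a + j + 1) * (w + j + 1)) ≤ (s + 1) * ((x - j) * (y - j)) :=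
    calc s * ((a + j + 1) * (w + j + 1))
        ≤ s * ((x - j) * (y - j) + s * (a + x + y + w)) := Nat.mul_le_mul_left s hclose
      _ = s * ((x - j) * (y - j)) + s ^ 2 * (a + x + y + w) := by ring
      _ ≤ s * ((x - j) * (y - j)) + (x - j) * (y - j) := Nat.add_le_add_left hlarge _
      _ = (s + 1) * ((x - j) * (y - j)) := (Nat.succ_mul ..).symm
  obtain ⟨b, hb⟩ : ∃ b, y - j = b + 1 := ⟨y - j - 1, by lia⟩
  rw [Nat.sub_add_eq, hb, Nat.add_sub_cancel]
  refine mul_choose_mul_choose_succ_le (by lia) ?_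
  rwa [show a + x - (a + j) = x - j by lia, ← hb, show y + w - b = w + j + 1 by lia]

theorem succ_mul_choose_mul_choose_le_of_det_nonpos (hdet : a * w ≤ x * y)
    (hN : 0 < a + x + y + w) (hs : 4 * s ^ 2 * (a + x + y + w) ≤ x * y) :
    ((s : ℝ) + 1) * ((a + x).choose a * (y + w).choose y) ≤
      Real.exp 1 * (a + x + y + w).choose (a + y) := by
  set u : ℕ → ℝ := fun j => (a + x).choose (a + j) * (y + w).choose (y - j)
  have hstep : ∀ j < s, s * u j ≤ (s + 1) * u (j + 1) := fun j hj => by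
    simp only [u]
    exact_mod_cast mul_choose_mul_choose_add_le_of_det_nonpos hdet hN hs hj
  have hy : s ≤ y := by
    have := two_mul_le_of_four_mul_sq_mul_le hN (y := x) (by lia) (by rwa [mul_comm y])
    lia
  have hsum : ∑ j ∈ Finset.range (s + 1), u j ≤ ((a + x + y + w).choose (a + y) : ℝ) := by
    simp only [u, add_assoc (a + x)]
    exact_mod_cast sum_range_choose_mul_choose_le (a + x) (y + w) a hy
  calc ((s : ℝ) + 1) * ((a + x).choose a * (y + w).choose y) = (s + 1) * u 0 := rfl
    _ ≤ Real.exp 1 * ∑ j ∈ Finset.range (s + 1), u j :=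
        succ_mul_le_exp_one_mul_sum (by positivity) hstep
    _ ≤ Real.exp 1 * (a + x + y + w).choose (a + y) := by gcongr

theorem four_mul_sq_mul_le_of_det_nonpos (hdet : a * w ≤ x * y) (hN : 0 < a + x + y + w)
    (hs : 4 * s ^ 2 * (a + x + y + w) ^ 3 ≤ (a + x) * (y + w) * (a + y) * (x + w)) :
    4 * s ^ 2 * (a + x + y + w) ≤ x * y := by
  have hx : (a + x) * (x + w) ≤ x * (a + x + y + w) := by linarith
  have hy : (y + w) * (a + y) ≤ y * (a + x + y + w) := by linarith
  refine Nat.le_of_mul_le_mul_right ?_ (pow_pos hN 2)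
  calc 4 * s ^ 2 * (a + x + y + w) * (a + x + y + w) ^ 2
      = 4 * s ^ 2 * (a + x + y + w) ^ 3 := by ring
    _ ≤ (a + x) * (y + w) * (a + y) * (x + w) := hs
    _ = (a + x) * (x + w) * ((y + w) * (a + y)) := by ring
    _ ≤ x * (a + x + y + w) * (y * (a + x + y + w)) := Nat.mul_le_mul hx hy
    _ = x * y * (a + x + y + w) ^ 2 := by ring

theorem succ_mul_choose_mul_choose_le (hN : 0 < a + x + y + w)
    (hs : 4 * s ^ 2 * (a + x + y + w) ^ 3 ≤ (a + x) * (y + w) * (a + y) * (x + w)) :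
    ((s : ℝ) + 1) * ((a + x).choose a * (y + w).choose y) ≤
      Real.exp 1 * (a + x + y + w).choose (a + y) := by
  rcases le_total (a * w) (x * y) with hdet | hdet
  · exact succ_mul_choose_mul_choose_le_of_det_nonpos hdet hN
      (four_mul_sq_mul_le_of_det_nonpos hdet hN hs)
  · have htotal : x + a + w + y = a + x + y + w := by ring
    have hs' : 4 * s ^ 2 * (x + a + w + y) ^ 3 ≤ (x + a) * (w + y) * (x + w) * (a + y) := by
      rw [htotal]
      linarith
    have hswap := succ_mul_choose_mul_choose_le_of_det_nonpos hdet (by rwa [htotal])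
      (four_mul_sq_mul_le_of_det_nonpos hdet (by rwa [htotal]) hs')
    rwa [htotal, add_comm x, add_comm w, ← Nat.choose_symm_add, ← Nat.choose_symm_add (a := y),
      Nat.choose_symm_of_eq_add (show a + x + y + w = (x + w) + (a + y) by ring)] at hswap

end Table

section Probability

/-- The standard deviation of the hypergeometric distribution `H(K, n, N)`, up to the factor
`√(1 - 1 / N)`; it is the scale on which the distribution spreads out. The subtractions are those
of `ℝ`, so nothing is truncated; for `N = 0` the value is `0`. -/
def hypergeometricScale (K n N : ℕ) : ℝ :=
  √((K : ℝ) * (N - K) * n * (N - n) / (N : ℝ) ^ 3)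

theorem sqrt_mul_rpow_le_hypergeometricScale {K n N : ℕ} {ε : ℝ} (hN : 0 < N) (hε : 0 ≤ ε)
    (hK : √N ≤ K) (hK' : √N ≤ N - K) (hn : ε * N ≤ n) (hn' : ε * N ≤ N - n) :
    √ε / 2 * (N : ℝ) ^ (1 / 4 : ℝ) ≤ hypergeometricScale K n N := by
  have mul_add_le : ∀ {c p q : ℝ}, 0 ≤ c → c ≤ p → c ≤ q → c * (p + q) ≤ 2 * (p * q) :=
    fun hc hp hq => by nlinarith
  have hNpos : (0 : ℝ) < N := by exact_mod_cast hN
  have hrow : √N * N ≤ 2 * (K * (N - K)) := by simpa using mul_add_le (by positivity) hK hK'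
  have hcol : ε * N * N ≤ 2 * (n * (N - n)) := by simpa using mul_add_le (by positivity) hn hn'
  have hrpow : ((N : ℝ) ^ (1 / 4 : ℝ)) ^ 2 = √N := by
    rw [← Real.rpow_natCast, ← Real.rpow_mul hNpos.le, Real.sqrt_eq_rpow]
    norm_num
  refine Real.le_sqrt_of_sq_le ?_
  rw [mul_pow, div_pow, Real.sq_sqrt hε, hrpow, le_div_iff₀ (by positivity)]
  have hrow_nonneg : 0 ≤ 2 * ((K : ℝ) * (N - K)) := hrow.trans' (by positivity)
  have hmul := mul_le_mul hrow hcol (by positivity) hrow_nonneg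
  linarith

theorem sq_hypergeometricScale_mul_pow {a x y w : ℕ} (hN : 0 < a + x + y + w) :
    hypergeometricScale (a + x) (a + y) (a + x + y + w) ^ 2 * (a + x + y + w : ℝ) ^ 3 =
      (a + x) * (y + w) * (a + y) * (x + w) := by
  have hNpos : (0 : ℝ) < a + x + y + w := by exact_mod_cast hN
  have hrow : ((a + x + y + w : ℕ) : ℝ) - (a + x : ℕ) = y + w := by push_cast; ring
  have hcol : ((a + x + y + w : ℕ) : ℝ) - (a + y : ℕ) = x + w := by push_cast; ring
  rw [hypergeometricScale, hrow, hcol, Real.sq_sqrt (by positivity)]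
  push_cast
  field_simp

theorem hypergeometricScale_mul_choose_mul_choose_le (a x y w : ℕ) :
    hypergeometricScale (a + x) (a + y) (a + x + y + w) *
        ((a + x).choose a * (y + w).choose y) ≤
      2 * Real.exp 1 * (a + x + y + w).choose (a + y) := by
  set σ := hypergeometricScale (a + x) (a + y) (a + x + y + w) with hσ
  have hσ_nonneg : 0 ≤ σ := Real.sqrt_nonneg _
  rcases Nat.eq_zero_or_pos (a + x + y + w) with hN | hN
  · have : σ = 0 := by simp [hσ, hypergeometricScale, hN]
    rw [this, zero_mul]
    positivity
  set s := ⌊σ / 2⌋₊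
  have hfloor : 2 * (s : ℝ) ≤ σ := by linarith [Nat.floor_le (div_nonneg hσ_nonneg zero_le_two)]
  have hs : 4 * s ^ 2 * (a + x + y + w) ^ 3 ≤ (a + x) * (y + w) * (a + y) * (x + w) := by
    have hreal : 4 * (s : ℝ) ^ 2 * (a + x + y + w : ℝ) ^ 3 ≤
        (a + x) * (y + w) * (a + y) * (x + w) := by
      rw [← sq_hypergeometricScale_mul_pow hN]
      gcongr
      linarith [pow_le_pow_left₀ (by positivity) hfloor 2]
    exact_mod_cast hreal
  have hlt : σ / 2 < s + 1 := Nat.lt_floor_add_one _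
  have hmain := succ_mul_choose_mul_choose_le hN hs
  have hle := mul_le_mul_of_nonneg_right hlt.le
    (show (0 : ℝ) ≤ (a + x).choose a * (y + w).choose y by positivity)
  linarith

variable {α : Type*} [Fintype α] [DecidableEq α]

theorem card_filter_card_inter_eq (A : Finset α) (a b : ℕ) :
    (Finset.univ.filter fun T : {T : Finset α // T.card = a + b} => (T.1 ∩ A).card = a).card =
      A.card.choose a * Aᶜ.card.choose b := by
  rw [← Finset.card_powersetCard, ← Finset.card_powersetCard, ← Finset.card_product]
  refine Finset.card_bij (fun T _ => (T.1 ∩ A, T.1 \ A)) ?_ ?_ ?_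
  · rintro ⟨T, hT⟩ hTA
    rw [Finset.mem_filter_univ] at hTA
    have hsplit := Finset.card_sdiff_add_card_inter T A
    simp only [Finset.mem_product, Finset.mem_powersetCard]
    exact ⟨⟨Finset.inter_subset_right, hTA⟩, (show T \ A ⊆ Aᶜ by grind [Finset.mem_compl]), by lia⟩
  · rintro ⟨T, _⟩ _ ⟨U, _⟩ _ hTU
    rw [Prod.mk.injEq] at hTU
    refine Subtype.ext (show T = U from ?_)
    rw [← Finset.sdiff_union_inter T A, hTU.1, hTU.2, Finset.sdiff_union_inter]
  · rintro ⟨U, V⟩ hUV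
    simp only [Finset.mem_product, Finset.mem_powersetCard] at hUV
    obtain ⟨⟨hUA, rfl⟩, hVA, rfl⟩ := hUV
    have hdisj : Disjoint U V := disjoint_compl_right.mono hUA hVA
    have hinter : (U ∪ V) ∩ A = U := by grind [Finset.mem_compl]
    have hdiff : (U ∪ V) \ A = V := by grind [Finset.mem_compl]
    exact ⟨⟨U ∪ V, Finset.card_union_of_disjoint hdisj⟩, by simp [hinter], by simp [hinter, hdiff]⟩

theorem unifProb_card_inter_eq (A : Finset α) (a b : ℕ) :
    unifProb (fun T : {T : Finset α // T.card = a + b} => (T.1 ∩ A).card = a) =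
      A.card.choose a * Aᶜ.card.choose b / (Fintype.card α).choose (a + b) := by
  rw [← Nat.cast_mul, ← card_filter_card_inter_eq, unifProb, Fintype.card_finset_len]
  congr!

theorem unifProb_nonneg {Ω : Type*} [Fintype Ω] (p : Ω → Prop) : 0 ≤ unifProb p :=
  div_nonneg (Nat.cast_nonneg _) (Nat.cast_nonneg _)

theorem unifProb_eq_zero {Ω : Type*} [Fintype Ω] {p : Ω → Prop} (hp : ∀ t, ¬ p t) :
    unifProb p = 0 := by
  simp [unifProb, hp]

theorem hypergeometricScale_mul_unifProb_le (A : Finset α) (n : ℕ) (a : ℤ) :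
    hypergeometricScale A.card n (Fintype.card α) *
        unifProb (fun T : {T : Finset α // T.card = n} => ((T.1 ∩ A).card : ℤ) = a) ≤
      2 * Real.exp 1 := by
  by_cases hattained : ∃ T : {T : Finset α // T.card = n}, ((T.1 ∩ A).card : ℤ) = a
  swap
  · rw [unifProb_eq_zero (not_exists.mp hattained), mul_zero]
    positivity
  obtain ⟨⟨T, hT⟩, rfl⟩ := hattained
  obtain ⟨x, hx⟩ := Nat.exists_eq_add_of_le (Finset.card_le_card (T.inter_subset_right (s₂ := A)))
  obtain ⟨w, hw⟩ := Nat.exists_eq_add_of_le (Finset.card_le_card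
    (show T \ A ⊆ Aᶜ by grind [Finset.mem_compl]))
  have hN : Fintype.card α = (T ∩ A).card + x + (T \ A).card + w := by
    rw [← Finset.card_add_card_compl A, hx, hw, ← add_assoc]
  obtain rfl : n = (T ∩ A).card + (T \ A).card := by
    rw [Finset.card_inter_add_card_sdiff, hT]
  simp only [Nat.cast_inj]
  rw [unifProb_card_inter_eq, ← mul_div_assoc, div_le_iff₀, hN, hx, hw]
  · exact hypergeometricScale_mul_choose_mul_choose_le ..
  · exact_mod_cast Nat.choose_pos (by lia)

theorem hypergeometric_anticoncentration_one_general [Nonempty α] {ε : ℝ} (hε : 0 < ε)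
    (A : Finset α) (n : ℕ) (hA : √(Fintype.card α) ≤ A.card)
    (hA' : √(Fintype.card α) ≤ Fintype.card α - A.card)
    (hn : ε * Fintype.card α ≤ n) (hn' : n ≤ (1 - ε) * Fintype.card α) (a : ℤ) :
    unifProb (fun T : {T : Finset α // T.card = n} => ((T.1 ∩ A).card : ℤ) = a) ≤
      4 * Real.exp 1 / √ε * (Fintype.card α : ℝ) ^ (-(1 : ℝ) / 4) := by
  set P := unifProb (fun T : {T : Finset α // T.card = n} => ((T.1 ∩ A).card : ℤ) = a)
  set t := (Fintype.card α : ℝ) ^ (1 / 4 : ℝ)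
  have ht : 0 < t := Real.rpow_pos_of_pos (by exact_mod_cast Fintype.card_pos) _
  have hP : 0 ≤ P := unifProb_nonneg _
  have hscale : √ε / 2 * t ≤ hypergeometricScale A.card n (Fintype.card α) :=
    sqrt_mul_rpow_le_hypergeometricScale Fintype.card_pos hε.le hA hA' hn (by linarith)
  have hPt : √ε / 2 * t * P ≤ 2 * Real.exp 1 :=
    (mul_le_mul_of_nonneg_right hscale hP).trans (hypergeometricScale_mul_unifProb_le A n a)
  rw [neg_div, Real.rpow_neg (Nat.cast_nonneg _), ← div_eq_mul_inv, div_div,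
    le_div_iff₀ (mul_pos (Real.sqrt_pos.mpr hε) ht)]
  linarith

end Probability

/-- Hypergeometric anticoncentration, part 1. -/
theorem hypergeometric_anticoncentration_one :
    ∃ C : ℝ, 0 < C ∧ ∀ (S M₁ M₂ : ℕ), 0 < S → 0 < M₁ → 0 < M₂ →
      Real.sqrt S ≤ (M₁ : ℝ) → (M₁ : ℝ) ≤ (S : ℝ)/2 →
      (S : ℝ)/4 ≤ (M₂ : ℝ) → (M₂ : ℝ) ≤ 3*(S : ℝ)/4 →
      ∀ A : Finset (Fin S), A.card = M₁ → ∀ a : ℤ,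
        unifProb (fun T : {T : Finset (Fin S) // T.card = M₂} =>
            ((T.1 ∩ A).card : ℤ) = a) ≤ C * (S : ℝ) ^ (-(1 : ℝ)/4) := by
  refine ⟨4 * Real.exp 1 / √(1 / 4), by positivity, ?_⟩
  intro S M₁ M₂ hS _ _ hM₁ hM₁' hM₂ hM₂' A hA a
  subst hA
  have : Nonempty (Fin S) := ⟨⟨0, hS⟩⟩
  simpa only [Fintype.card_fin] using
    hypergeometric_anticoncentration_one_general (ε := 1 / 4) (by norm_num) A M₂
      (by simpa using hM₁) (by rw [Fintype.card_fin]; linarith) (by rw [Fintype.card_fin]; linarith)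
      (by rw [Fintype.card_fin]; linarith) a

end
end
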